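/- arXiv:1304.2649 — 2 statements merged into one kernel-verified Lean document; each statement's English description precedes it below -/
import Mathlib

section
/- Let K be a φ-pseudo field and A ∈ GL_n(K). Let R be a K-φ-algebra (with endomorphism φ_R extending φ) that is a φ_R-pseudo domain, and suppose there is Y ∈ GL_n(R) with φ_R applied entrywise to Y equal to (algebraMap K R applied entrywise to A) · Y, such that R is generated as a K-algebra by the entries of Y together with (det Y)^{-1}. Let Q be the localization of R at its non-zero-divisors and let Φ : Q → Q be a ring endomorphism with Φ ∘ algebraMap R Q = algebraMap R Q ∘ φ_R. Then R is φ_R-simple if and only if every Φ-constant of Q is algebraic over K^φ, i.e., for every x ∈ Q with Φ(x) = x there is a nonzero polynomial with coefficients in the image of K^φ = {a ∈ K | φ(a) = a} in Q that vanishes at x. -/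
/-- A `φ`-ring `R` is `φ`-simple if the zero ideal and the whole ring are its only
`φ`-ideals (ideals `I` with `φ(I) ⊆ I`). -/
def DiffSimple {R : Type*} [CommRing R] (φ : R →+* R) : Prop :=
  (⊥ : Ideal R) ≠ ⊤ ∧ ∀ I : Ideal R, (∀ x ∈ I, φ x ∈ I) → I = ⊥ ∨ I = ⊤

/-- An ideal `p` of a ring with endomorphism `σ` is `σ`-pseudo prime if
`p = q ∩ σ⁻¹(q) ∩ … ∩ σ^{-(d-1)}(q)` for some `d ≥ 1` and some `σ^d`-prime ideal `q`. -/
def PseudoPrime {R : Type*} [CommRing R] (σ : R →+* R) (p : Ideal R) : Prop :=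
  ∃ d : ℕ, 1 ≤ d ∧ ∃ q : Ideal R, q.IsPrime ∧ Ideal.comap (σ ^ d) q = q ∧
    p = ⨅ i ∈ Finset.range d, Ideal.comap (σ ^ i) q

/-- A ring with endomorphism `φ` is a `φ`-pseudo domain if its zero ideal is
`φ`-pseudo prime. -/
def PseudoDomain {R : Type*} [CommRing R] (φ : R →+* R) : Prop :=
  PseudoPrime φ (⊥ : Ideal R)

/-- A `φ`-pseudo field is a `φ`-simple Noetherian `φ`-ring in which every
non-zero-divisor is a unit. -/
def PseudoField (R : Type*) [CommRing R] (φ : R →+* R) : Prop :=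
  DiffSimple φ ∧ IsNoetherianRing R ∧ ∀ x ∈ nonZeroDivisors R, IsUnit x

/-!
A constant `c` of a `φ`-simple algebra `T` of finite type over a pseudo field `K` is algebraic:
if it were transcendental, Chevalley's theorem would make some `c ^ N - 1` a nonunit, but a nonzero
constant generates a nonzero `φ`-ideal and so is a unit. This gives the forward direction, because
the constants of `Q` lie in `R` when `R` is `φ`-simple. Moreover the monic polynomial of least
degree killing `c` has constant coefficients, as a `φ`-simple base turns the leading coefficients
of a `φ`-ideal of polynomials into units.

Conversely, compare `R` with a `φ`-simple quotient `S` of `R` inside a `φ`-simple quotient `T` of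
`Q ⊗ S`. There the two fundamental matrices differ by a matrix of constants. Constants of `T` are
algebraic over `Q` with constant minimal coefficients, hence integral over `K`, so the images of
`R` and `S` are integral over each other. By lying over, a proper `φ`-ideal of `R` then contains no
element that becomes invertible in `Q`, whereas every nonzero `φ`-ideal of a pseudo domain contains
a non-zero-divisor.
-/

open Function (IsFixedPt Semiconj)
open Polynomial TensorProduct

/-- A `φ`-ideal, phrased as the hypothesis of `Ideal.quotientMap I φ`. -/
def IsDiffIdeal {R : Type*} [CommRing R] (φ : R →+* R) (I : Ideal R) : Prop :=
  I ≤ I.comap φ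

namespace IsDiffIdeal

variable {R S : Type*} [CommRing R] [CommRing S] {φ : R →+* R} {ψ : S →+* S} {f : R →+* S}

protected theorem bot : IsDiffIdeal φ (⊥ : Ideal R) :=
  bot_le

protected theorem sSup {s : Set (Ideal R)} (hs : ∀ I ∈ s, IsDiffIdeal φ I) :
    IsDiffIdeal φ (sSup s) :=
  sSup_le fun I hI => (hs I hI).trans (Ideal.comap_mono (le_sSup hI))

protected theorem comap {J : Ideal S} (hJ : IsDiffIdeal ψ J) (hf : Semiconj f φ ψ) :
    IsDiffIdeal φ (J.comap f) := fun x hx => by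
  rw [Ideal.mem_comap, Ideal.mem_comap, hf x]
  exact hJ hx

protected theorem ker (hf : Semiconj f φ ψ) : IsDiffIdeal φ (RingHom.ker f) :=
  IsDiffIdeal.bot.comap hf

protected theorem map {I : Ideal R} (hI : IsDiffIdeal φ I) (hf : Semiconj f φ ψ) :
    IsDiffIdeal ψ (I.map f) :=
  Ideal.map_le_iff_le_comap.mpr fun x hx => by
    rw [Ideal.mem_comap, Ideal.mem_comap, ← hf x]
    exact Ideal.mem_map_of_mem f (hI hx)

theorem le_comap_pow {I : Ideal R} (hI : IsDiffIdeal φ I) (n : ℕ) : I ≤ I.comap (φ ^ n) :=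
  fun x hx => by
    rw [Ideal.mem_comap, RingHom.coe_pow]
    exact Set.MapsTo.iterate (s := (I : Set R)) (fun _ h => hI h) n hx

theorem span_singleton {a : R} (ha : IsFixedPt φ a) : IsDiffIdeal φ (Ideal.span {a}) := by
  rw [IsDiffIdeal, Ideal.span_singleton_le_iff_mem, Ideal.mem_comap, ha.eq]
  exact Ideal.mem_span_singleton_self a

protected theorem nilradical (φ : R →+* R) : IsDiffIdeal φ (nilradical R) :=
  fun _ hx => IsNilpotent.map hx φ

theorem leadingCoeffNth {I : Ideal R[X]} (hI : IsDiffIdeal (mapRingHom φ) I) (n : ℕ) :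
    IsDiffIdeal φ (I.leadingCoeffNth n) := fun x hx => by
  rw [Ideal.mem_comap]
  rw [Ideal.mem_leadingCoeffNth] at hx ⊢
  obtain ⟨p, hpI, hpn, rfl⟩ := hx
  by_cases h0 : φ p.leadingCoeff = 0
  · exact ⟨0, I.zero_mem, bot_le, by rw [leadingCoeff_zero, h0]⟩
  · exact ⟨p.map φ, hI hpI, degree_map_le.trans hpn, leadingCoeff_map_of_leadingCoeff_ne_zero φ h0⟩

end IsDiffIdeal

theorem exists_diffSimple_quotient {R : Type*} [CommRing R] [Nontrivial R] (φ : R →+* R) :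
    ∃ (m : Ideal R) (hm : IsDiffIdeal φ m), DiffSimple (Ideal.quotientMap m φ hm) := by
  obtain ⟨m, -, ⟨hm, hm_top⟩, hmax⟩ := zorn_le_nonempty₀ {J : Ideal R | IsDiffIdeal φ J ∧ J ≠ ⊤}
    (fun c hc hchain J hJ => ⟨sSup c, ⟨.sSup fun I hI => (hc hI).1, fun h_top =>
      (CompleteLattice.IsCompactElement.directed_sSup_lt_of_lt Ideal.isCompactElement_top
        ⟨J, hJ⟩ hchain.directedOn fun I hI => (hc hI).2.lt_top).ne h_top⟩,
      fun I hI => le_sSup hI⟩) ⊥ ⟨.bot, bot_ne_top⟩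
  have := Ideal.Quotient.nontrivial_iff.mpr hm_top
  refine ⟨m, hm, bot_ne_top, fun J hJ => or_iff_not_imp_right.mpr fun hJ_top => ?_⟩
  have hJm : J.comap (Ideal.Quotient.mk m) ≤ m :=
    hmax ⟨.comap (ψ := Ideal.quotientMap m φ hm) hJ fun _ => rfl, Ideal.comap_ne_top _ hJ_top⟩
      (Ideal.mk_ker.symm.trans_le (Ideal.ker_le_comap _))
  rw [eq_bot_iff, ← Ideal.map_comap_of_surjective _ Ideal.Quotient.mk_surjective J]
  exact (Ideal.map_mono hJm).trans (Ideal.map_quotient_self m).le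

namespace DiffSimple

variable {K T : Type*} [CommRing K] [CommRing T] {φ : K →+* K} {ψ : T →+* T}

theorem of_forall_eq_top [Nontrivial K]
    (h : ∀ I : Ideal K, IsDiffIdeal φ I → I ≠ ⊥ → I = ⊤) : DiffSimple φ :=
  ⟨bot_ne_top, fun I hI => or_iff_not_imp_left.mpr (h I hI)⟩

theorem eq_bot (h : DiffSimple φ) {I : Ideal K} (hI : IsDiffIdeal φ I) (hI_top : I ≠ ⊤) : I = ⊥ :=
  (h.2 I hI).resolve_right hI_top

theorem eq_top (h : DiffSimple φ) {I : Ideal K} (hI : IsDiffIdeal φ I) (hI_bot : I ≠ ⊥) : I = ⊤ :=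
  (h.2 I hI).resolve_left hI_bot

theorem nontrivial (h : DiffSimple φ) : Nontrivial K :=
  (Submodule.nontrivial_iff K).mp ⟨_, _, h.1⟩

theorem injective_of_semiconj [Nontrivial T] (h : DiffSimple φ) {f : K →+* T}
    (hf : Semiconj f φ ψ) : Function.Injective f :=
  (RingHom.injective_iff_ker_eq_bot f).mpr (h.eq_bot (.ker hf) (RingHom.ker_ne_top f))

theorem isUnit_of_isFixedPt (h : DiffSimple φ) {a : K} (ha : IsFixedPt φ a) (h0 : a ≠ 0) :
    IsUnit a :=
  Ideal.span_singleton_eq_top.mp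
    (h.eq_top (.span_singleton ha) (mt Ideal.span_singleton_eq_bot.mp h0))

theorem isReduced (h : DiffSimple φ) : IsReduced K := by
  have := h.nontrivial
  refine nilradical_eq_bot_iff.mp (h.eq_bot (.nilradical φ) ?_)
  rw [Ideal.ne_top_iff_one, mem_nilradical]
  exact not_isNilpotent_one

theorem exists_monic_mem_map_eq_self (h : DiffSimple φ) {I : Ideal K[X]}
    (hI : IsDiffIdeal (mapRingHom φ) I) (h0 : I ≠ ⊥) : ∃ p ∈ I, p.Monic ∧ p.map φ = p := by
  have := h.nontrivial
  obtain ⟨q, ⟨hqI, hq0⟩, hmin⟩ :=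
    degree_lt_wf.has_min {p | p ∈ I ∧ p ≠ 0} (Submodule.exists_mem_ne_zero_of_ne_bot h0)
  have hlead : I.leadingCoeffNth q.natDegree = ⊤ := by
    refine h.eq_top (hI.leadingCoeffNth _) fun hbot => hq0 (leadingCoeff_eq_zero.mp ?_)
    rw [← Ideal.mem_bot, ← hbot, Ideal.mem_leadingCoeffNth]
    exact ⟨q, hqI, degree_le_natDegree, rfl⟩
  obtain ⟨p, hpI, hpq, hp⟩ :=
    (Ideal.mem_leadingCoeffNth _ _ _).mp ((Ideal.eq_top_iff_one _).mp hlead)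
  replace hp : p.Monic := hp
  refine ⟨p, hpI, hp, by_contra fun hne => hmin (p.map φ - p)
    ⟨I.sub_mem (hI hpI) hpI, sub_ne_zero.mpr hne⟩ ?_⟩
  calc (p.map φ - p).degree < (p.map φ).degree :=
        degree_sub_lt_left (hp.degree_map φ) (hp.map φ).ne_zero (by rw [hp.map φ, hp])
    _ = p.degree := hp.degree_map φ
    _ ≤ q.degree := hpq.trans_eq (degree_eq_natDegree hq0).symm

end DiffSimple

theorem semiconj_aeval {K T : Type*} [CommRing K] [CommRing T] [Algebra K T] {φ : K →+* K}
    {ψ : T →+* T} (hψ : Semiconj (algebraMap K T) φ ψ) {c : T} (hc : IsFixedPt ψ c) :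
    Semiconj (aeval (R := K) c) (mapRingHom φ) ψ := fun p => by
  have hcomp : (algebraMap K T).comp φ = ψ.comp (algebraMap K T) := RingHom.ext hψ
  rw [coe_mapRingHom, aeval_def, eval₂_map, hcomp, aeval_def, hom_eval₂, hc.eq]

theorem DiffSimple.exists_monic_map_eq_self {K T : Type*} [CommRing K] [CommRing T] [Algebra K T]
    {φ : K →+* K} {ψ : T →+* T} (h : DiffSimple φ) (hψ : Semiconj (algebraMap K T) φ ψ) {c : T}
    (hc : IsFixedPt ψ c) (halg : IsAlgebraic K c) :
    ∃ p : K[X], p.Monic ∧ p.map φ = p ∧ aeval c p = 0 := by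
  obtain ⟨q, hq0, hqc⟩ := halg
  obtain ⟨p, hp, hmonic, hpφ⟩ := h.exists_monic_mem_map_eq_self
    (IsDiffIdeal.ker (f := (aeval c : K[X] →ₐ[K] T).toRingHom) (semiconj_aeval hψ hc))
    fun hbot => hq0 (Ideal.mem_bot.mp (hbot ▸ hqc))
  exact ⟨p, hmonic, hpφ, hp⟩

theorem exists_basicOpen_subset_range_comap (R S : Type*) [CommRing R] [CommRing S] [Nontrivial S]
    [Algebra R S] [Algebra.HasGoingDown R S] [Algebra.FinitePresentation R S] :
    ∃ g : R, g ≠ 0 ∧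
      (PrimeSpectrum.basicOpen g : Set (PrimeSpectrum R)) ⊆
        Set.range (PrimeSpectrum.comap (algebraMap R S)) := by
  obtain ⟨x⟩ : Nonempty (PrimeSpectrum S) := inferInstance
  obtain ⟨_, ⟨_, ⟨g, rfl⟩, rfl⟩, hxg, hg⟩ :=
    PrimeSpectrum.isBasis_basic_opens.exists_subset_of_mem_open (Set.mem_range_self x)
      (PrimeSpectrum.isOpenMap_comap_of_hasGoingDown_of_finitePresentation
        (R := R) (S := S)).isOpen_range
  refine ⟨g, ?_, hg⟩
  rintro rfl
  exact hxg (Ideal.zero_mem _)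

theorem exists_ne_zero_forall_squarefree_dvd_of_isUnit_aeval {F T : Type*} [Field F] [CommRing T]
    [IsDomain T] [Algebra F T] [Algebra.FiniteType F T] {c : T} (hc : Transcendental F c) :
    ∃ g : F[X], g ≠ 0 ∧ ∀ p : F[X], Squarefree p → IsUnit (aeval c p) → p ∣ g := by
  let : Algebra F[X] T := (aeval c).toAlgebra
  have : IsScalarTower F F[X] T := .of_algebraMap_eq fun a => (aeval_C c a).symm
  have : Algebra.FiniteType F[X] T := .of_restrictScalars_finiteType F F[X] T
  have : FaithfulSMul F[X] T :=
    (faithfulSMul_iff_algebraMap_injective _ _).mpr (transcendental_iff_injective.mp hc)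
  have : Algebra.FinitePresentation F[X] T := Algebra.FinitePresentation.of_finiteType.mp ‹_›
  obtain ⟨g, hg0, hg⟩ := exists_basicOpen_subset_range_comap F[X] T
  refine ⟨g, hg0, fun p hp hpc => ?_⟩
  have hle : PrimeSpectrum.basicOpen g ≤ PrimeSpectrum.basicOpen p := fun x hx => by
    obtain ⟨y, rfl⟩ := hg hx
    exact fun hpy => y.2.ne_top (Ideal.eq_top_of_isUnit_mem _ hpy hpc)
  rw [PrimeSpectrum.basicOpen_le_basicOpen_iff,
    (isRadical_iff_span_singleton.mp hp.isRadical).radical] at hle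
  exact Ideal.mem_span_singleton.mp hle

theorem exists_pow_sub_one_not_isUnit_of_field {F T : Type*} [Field F] [CommRing T] [IsDomain T]
    [Algebra F T] [Algebra.FiniteType F T] {c : T} (hc : Transcendental F c) :
    ∃ N : ℕ, 0 < N ∧ ¬ IsUnit (c ^ N - 1) := by
  obtain ⟨g, hg0, hg⟩ := exists_ne_zero_forall_squarefree_dvd_of_isUnit_aeval hc
  obtain ⟨N, hdeg, hN⟩ : ∃ N : ℕ, g.natDegree < N ∧ (N : F) ≠ 0 := by
    by_contra! h
    have h1 := h (g.natDegree + 1) (by lia)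
    have h2 := h (g.natDegree + 1 + 1) (by lia)
    rw [Nat.cast_succ, h1, zero_add] at h2
    exact one_ne_zero h2
  refine ⟨N, by lia, fun hu => hdeg.not_ge ?_⟩
  have hdvd : (X ^ N - 1 : F[X]) ∣ g :=
    hg _ (X_pow_sub_one_separable_iff.mpr hN).squarefree (by simpa using hu)
  simpa only [← C_1, natDegree_X_pow_sub_C] using natDegree_le_of_dvd hdvd hg0

theorem map_C_mem_minimalPrimes {K : Type*} [CommRing K] {𝔭 : Ideal K}
    (h𝔭 : 𝔭 ∈ minimalPrimes K) : 𝔭.map (C : K →+* K[X]) ∈ minimalPrimes K[X] := by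
  have := h𝔭.1.1
  refine ⟨⟨Ideal.isPrime_map_C_of_isPrime, bot_le⟩, fun J hJ hle => ?_⟩
  have := hJ.1
  refine Ideal.map_le_iff_le_comap.mpr (h𝔭.2 ⟨Ideal.comap_isPrime C J, bot_le⟩ fun a ha => ?_)
  simpa using Ideal.mem_map_C_iff.mp (hle ha) 0

theorem exists_liesOver_transcendental {K T : Type*} [CommRing K] [CommRing T] [Algebra K T]
    {𝔭 : Ideal K} (h𝔭 : 𝔭 ∈ minimalPrimes K) {c : T} (hc : Transcendental K c) :
    ∃ (P : Ideal T) (_ : P.IsPrime) (_ : P.LiesOver 𝔭),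
      Transcendental (K ⧸ 𝔭) (Ideal.Quotient.mk P c) := by
  obtain ⟨P, hP, hPc⟩ := Ideal.exists_comap_eq_of_mem_minimalPrimes_of_injective
    (f := (aeval c : K[X] →ₐ[K] T).toRingHom) (transcendental_iff_injective.mp hc) _
    (map_C_mem_minimalPrimes h𝔭)
  have hmem (p : K[X]) : aeval c p ∈ P ↔ ∀ n, p.coeff n ∈ 𝔭 := by
    rw [← Ideal.mem_map_C_iff, ← hPc]
    rfl
  have : P.LiesOver 𝔭 := ⟨by
    ext a
    rw [Ideal.mem_comap, ← aeval_C c, hmem]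
    exact ⟨fun ha n => by rw [coeff_C]; split_ifs; exacts [ha, 𝔭.zero_mem],
      fun ha => by simpa using ha 0⟩⟩
  refine ⟨P, hP, this, transcendental_iff.mpr fun p hp => ?_⟩
  obtain ⟨p, rfl⟩ := map_surjective _ Ideal.Quotient.mk_surjective p
  have hpP : aeval c p ∈ P := by
    rw [← Ideal.Quotient.eq_zero_iff_mem, ← hp]
    exact ((aeval_map_algebraMap (K ⧸ 𝔭) _ p).trans (aeval_algebraMap_apply (T ⧸ P) c p)).symm
  ext n
  simpa [Ideal.Quotient.eq_zero_iff_mem] using (hmem p).mp hpP n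

theorem exists_pow_sub_one_not_isUnit {K T : Type*} [CommRing K] [Nontrivial K] [IsArtinianRing K]
    [CommRing T] [Algebra K T] [Algebra.FiniteType K T] {c : T} (hc : Transcendental K c) :
    ∃ N : ℕ, 0 < N ∧ ¬ IsUnit (c ^ N - 1) := by
  obtain ⟨𝔭, h𝔭⟩ := Ideal.nonempty_minimalPrimes (I := (⊥ : Ideal K)) bot_ne_top
  have := h𝔭.1.1
  let : Field (K ⧸ 𝔭) := Ideal.Quotient.field 𝔭
  obtain ⟨P, _, _, hcP⟩ := exists_liesOver_transcendental h𝔭 hc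
  obtain ⟨N, hN, hnu⟩ := exists_pow_sub_one_not_isUnit_of_field hcP
  exact ⟨N, hN, fun hu => hnu (by simpa using hu.map (Ideal.Quotient.mk P))⟩

theorem isArtinianRing_of_forall_isUnit {K : Type*} [CommRing K] [IsReduced K]
    [IsNoetherianRing K] (h : ∀ x ∈ nonZeroDivisors K, IsUnit x) : IsArtinianRing K := by
  refine isArtinianRing_iff_krullDimLE_zero.mpr (Ring.KrullDimLE.mk₀ fun I hI => ?_)
  obtain ⟨M, hM, hIM⟩ := I.exists_le_maximal hI.ne_top
  have hfin := minimalPrimes.finite_of_isNoetherianRing K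
  have hcover : (M : Set K) ⊆ ⋃ P ∈ (hfin.toFinset : Set (Ideal K)), (P : Set K) := fun x hx => by
    have hx' : x ∉ nonZeroDivisors K := fun hx' =>
      hM.ne_top (Ideal.eq_top_of_isUnit_mem _ hx (h x hx'))
    have hrad : (⊥ : Ideal K).radical = ⊥ := nilradical_eq_bot_iff.mpr ‹_›
    rw [hfin.coe_toFinset, minimalPrimes, Ideal.iUnion_minimalPrimes, hrad]
    rw [mem_nonZeroDivisors_iff_left] at hx'
    push Not at hx'
    obtain ⟨y, hxy, hy⟩ := hx'
    exact ⟨y, hy, hxy⟩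
  obtain ⟨P, hP, hMP⟩ := (Ideal.subset_union_prime (f := id) ⊥ ⊥ fun P hP _ _ =>
    (hfin.mem_toFinset.mp hP).1.1).mp hcover
  rw [hfin.mem_toFinset] at hP
  have hMI : M ≤ I := hMP.trans (hP.2 ⟨hI, bot_le⟩ (hIM.trans hMP))
  rwa [hIM.antisymm hMI]

namespace PseudoField

variable {K : Type*} [CommRing K] {φ : K →+* K}

theorem isArtinianRing (h : PseudoField K φ) : IsArtinianRing K := by
  obtain ⟨hs, _, hu⟩ := h
  have := hs.isReduced
  exact isArtinianRing_of_forall_isUnit hu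

variable {T : Type*} [CommRing T] [Algebra K T] [Algebra.FiniteType K T] {ψ : T →+* T}

theorem isAlgebraic_of_isFixedPt (h : PseudoField K φ) (hψ : DiffSimple ψ) {c : T}
    (hc : IsFixedPt ψ c) : IsAlgebraic K c := by
  have := h.1.nontrivial
  have := h.isArtinianRing
  by_contra htr
  obtain ⟨N, hN, hnu⟩ := exists_pow_sub_one_not_isUnit htr
  have hfix : IsFixedPt ψ (c ^ N - 1) := by
    rw [IsFixedPt, map_sub, map_pow, hc.eq, map_one]
  refine hnu (hψ.isUnit_of_isFixedPt hfix fun h0 => htr ⟨X ^ N - 1, ?_, by simpa using h0⟩)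
  exact X_pow_sub_C_ne_zero hN 1

end PseudoField

namespace PseudoDomain

variable {R : Type*} [CommRing R] {φ : R →+* R}

theorem nontrivial (h : PseudoDomain φ) : Nontrivial R := by
  obtain ⟨d, -, q, hq, -⟩ := h
  exact nontrivial_of_ne 1 0 fun h10 => hq.ne_top ((Ideal.eq_top_iff_one q).mpr (h10 ▸ q.zero_mem))

/-- A nonzero `φ`-ideal lies in none of the finitely many primes `φ⁻ʲ(q)` intersecting to zero, so
prime avoidance applies. -/
theorem exists_mem_nonZeroDivisors (h : PseudoDomain φ) {I : Ideal R}
    (hI : IsDiffIdeal φ I) (h0 : I ≠ ⊥) : ∃ x ∈ I, x ∈ nonZeroDivisors R := by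
  obtain ⟨d, -, q, hq, hqd, hbot⟩ := h
  have hzero (x : R) : x = 0 ↔ ∀ i < d, (φ ^ i) x ∈ q := by
    rw [← Ideal.mem_bot, hbot]
    simp only [Submodule.mem_iInf, Finset.mem_range, Ideal.mem_comap]
  have hnot : ¬ ∃ j ∈ Finset.range d, I ≤ q.comap (φ ^ j) := by
    rintro ⟨j, hj, hIj⟩
    rw [Finset.mem_range] at hj
    refine h0 (eq_bot_iff.mpr fun x hx => (hzero x).mpr fun i _ => ?_)
    rw [← hqd, Ideal.mem_comap, RingHom.coe_pow, RingHom.coe_pow, ← Function.iterate_add_apply,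
      show d + i = j + (d - j + i) by lia, Function.iterate_add_apply, ← RingHom.coe_pow,
      ← RingHom.coe_pow]
    exact hIj (hI.le_comap_pow _ hx)
  obtain ⟨y, hyI, hy⟩ := Set.not_subset.mp <| (Ideal.subset_union_prime 0 0
    fun j _ _ _ => Ideal.comap_isPrime (φ ^ j) q).not.mpr hnot
  simp only [Set.mem_iUnion, not_exists] at hy
  refine ⟨y, hyI, mem_nonZeroDivisors_iff_right.mpr fun z hz => (hzero z).mpr fun j hj => ?_⟩
  have hzy : (φ ^ j) z * (φ ^ j) y ∈ q := by
    rw [← map_mul, hz, map_zero]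
    exact q.zero_mem
  exact (hq.mem_or_mem hzy).resolve_right (hy j (Finset.mem_coe.mpr (Finset.mem_range.mpr hj)))

end PseudoDomain

section Localization

variable {R Q : Type*} [CommRing R] [CommRing Q] [Algebra R Q] {φ : R →+* R} {Φ : Q →+* Q}

theorem PseudoDomain.pseudoField [IsNoetherianRing R] [IsFractionRing R Q]
    (h : PseudoDomain φ) (hΦ : Semiconj (algebraMap R Q) φ Φ) : PseudoField Q Φ := by
  have := h.nontrivial
  have : Nontrivial Q := (IsFractionRing.injective R Q).nontrivial
  refine ⟨.of_forall_eq_top fun I hI hI0 => ?_,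
    IsLocalization.isNoetherianRing (nonZeroDivisors R) Q ‹_›,
    (IsFractionRing.nonZeroDivisors_eq_isUnit R Q).le⟩
  have hI0' : I.comap (algebraMap R Q) ≠ ⊥ := fun hbot => hI0 <| by
    rw [← IsLocalization.map_under (nonZeroDivisors R) Q I, Ideal.under, hbot, Ideal.map_bot]
  obtain ⟨r, hrI, hr⟩ := h.exists_mem_nonZeroDivisors (hI.comap hΦ) hI0'
  exact Ideal.eq_top_of_isUnit_mem _ hrI (IsLocalization.map_units Q ⟨r, hr⟩)

/-- The denominators of a constant form a nonzero `φ`-ideal. -/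
theorem DiffSimple.exists_isFixedPt_algebraMap_eq {M : Submonoid R} (hM : M ≤ nonZeroDivisors R)
    [IsLocalization M Q] (h : DiffSimple φ) (hΦ : Semiconj (algebraMap R Q) φ Φ) {x : Q}
    (hx : IsFixedPt Φ x) : ∃ c : R, IsFixedPt φ c ∧ algebraMap R Q c = x := by
  have := h.nontrivial
  have hinj : Function.Injective (algebraMap R Q) := IsLocalization.injective Q hM
  let D : Ideal R :=
    (LinearMap.range (Algebra.linearMap R Q)).comap (LinearMap.toSpanSingleton R Q x)
  have mem_D (r : R) : r ∈ D ↔ ∃ s, algebraMap R Q s = algebraMap R Q r * x := by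
    simp [D, Algebra.smul_def]
  have hD : IsDiffIdeal φ D := fun r hr => by
    obtain ⟨s, hs⟩ := (mem_D r).mp hr
    exact (mem_D _).mpr ⟨φ s, by rw [hΦ, hs, map_mul, hΦ, hx.eq]⟩
  have hD0 : D ≠ ⊥ := fun hbot => by
    obtain ⟨⟨s, r⟩, hrs⟩ := IsLocalization.surj M x
    have hr : (r : R) ∈ D := (mem_D _).mpr ⟨s, by rw [mul_comm]; exact hrs.symm⟩
    rw [hbot, Ideal.mem_bot] at hr
    exact zero_notMem_nonZeroDivisors (hr ▸ hM r.2)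
  obtain ⟨c, hc⟩ := (mem_D 1).mp ((Ideal.eq_top_iff_one D).mp (h.eq_top hD hD0))
  rw [map_one, one_mul] at hc
  exact ⟨c, hinj (by rw [hΦ, hc, hx.eq]), hc⟩

end Localization

theorem exists_diffSimple_compositum {K A B : Type*} [CommRing K] [IsArtinianRing K] [IsReduced K]
    [CommRing A] [CommRing B] [Nontrivial B] [Algebra K A] [Algebra K B]
    (hKA : Function.Injective (algebraMap K A)) {φ : K →+* K} {φA : A →+* A} {φB : B →+* B}
    (hA : Semiconj (algebraMap K A) φ φA) (hB : Semiconj (algebraMap K B) φ φB) :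
    ∃ (I : Ideal (A ⊗[K] B)) (ψ : (A ⊗[K] B) ⧸ I →+* (A ⊗[K] B) ⧸ I), DiffSimple ψ ∧
      Semiconj (algebraMap A ((A ⊗[K] B) ⧸ I)) φA ψ ∧
      Semiconj ((Ideal.Quotient.mkₐ K I).comp Algebra.TensorProduct.includeRight) φB ψ := by
  have : IsSemisimpleRing K := IsArtinianRing.isSemisimpleRing_of_isReduced K
  have : Module.Projective K B := Module.projective_of_isSemisimpleRing K B
  have : Nontrivial (A ⊗[K] B) :=
    (Algebra.TensorProduct.includeRight_injective (R := K) (A := A) (B := B) hKA).nontrivial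
  let F : A ⊗[K] B →+* A ⊗[K] B := Algebra.TensorProduct.mapRingHom φ φA φB
    (RingHom.ext fun a => (hA a).symm) (RingHom.ext fun a => (hB a).symm)
  have hFA (a : A) : F (a ⊗ₜ 1) = φA a ⊗ₜ 1 := by simp [F]
  have hFB (b : B) : F (1 ⊗ₜ b) = 1 ⊗ₜ φB b := by simp [F]
  obtain ⟨I, hI, hs⟩ := exists_diffSimple_quotient F
  exact ⟨I, Ideal.quotientMap I F hI, hs, fun a => congrArg (Ideal.Quotient.mk I) (hFA a).symm,
    fun b => congrArg (Ideal.Quotient.mk I) (hFB b).symm⟩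

theorem isIntegral_of_monic_of_coeff {K Q T : Type*} [CommRing K] [CommRing Q] [CommRing T]
    [Algebra K Q] [Algebra K T] [Algebra Q T] [IsScalarTower K Q T] {p : Q[X]} (hp : p.Monic)
    (hcoeff : ∀ n, IsIntegral K (p.coeff n)) {t : T} (ht : aeval t p = 0) : IsIntegral K t := by
  have hlift : p ∈ lifts (algebraMap (integralClosure K Q) Q) :=
    (lifts_iff_coeff_lifts p).mpr fun n => ⟨⟨p.coeff n, hcoeff n⟩, rfl⟩
  obtain ⟨q, rfl, -, hq⟩ := lifts_and_natDegree_eq_and_monic hlift hp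
  exact isIntegral_trans (A := integralClosure K Q) t
    ⟨q, hq, by rwa [aeval_map_algebraMap] at ht⟩

theorem isIntegralElem_of_mem_range_sup_range {R S T : Type*} [CommRing R] [CommRing S]
    [CommRing T] {α : R →+* T} {β : S →+* T} (hβ : ∀ s, α.IsIntegralElem (β s)) {t : T}
    (ht : t ∈ α.range ⊔ β.range) : α.IsIntegralElem t := by
  let : Algebra R T := α.toAlgebra
  have hle : α.range ⊔ β.range ≤ (integralClosure R T).toSubring := by
    refine sup_le ?_ ?_
    · rintro _ ⟨r, rfl⟩
      exact α.isIntegralElem_map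
    · rintro _ ⟨s, rfl⟩
      exact hβ s
  exact hle ht

theorem isIntegralElem_of_subring {R T : Type*} [CommRing R] [CommRing T] {B : Subring T}
    {α : R →+* B} {b : B} (h : (B.subtype.comp α).IsIntegralElem (b : T)) : α.IsIntegralElem b := by
  obtain ⟨p, hp, hpb⟩ := h
  refine ⟨p, hp, B.subtype_injective ?_⟩
  rwa [hom_eval₂, map_zero]

/-- The ideal `α(I)B` is proper by lying over, so `β` pulls it back to zero; but a monic equation
of `α x` over the simple ring would have a nonzero coefficient in this pullback. -/
theorem DiffSimple.notMem_nonZeroDivisors_of_isIntegral {R S B : Type*} [CommRing R] [CommRing S]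
    [CommRing B] [Nontrivial B] {φ : R →+* R} {σ : S →+* S} {ψ : B →+* B} (hσ : DiffSimple σ)
    {α : R →+* B} {β : S →+* B} (hα : Semiconj α φ ψ) (hβ : Semiconj β σ ψ)
    (hα_inj : Function.Injective α) (hα_int : α.IsIntegral) (hβ_int : β.IsIntegral)
    {I : Ideal R} (hI : IsDiffIdeal φ I) (hI_top : I ≠ ⊤) {x : R} (hx : x ∈ I) :
    α x ∉ nonZeroDivisors B := fun hαx => by
  have hIα_top : I.map α ≠ ⊤ := (Ideal.map_eq_top_iff α hα_inj hα_int).not.mpr hI_top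
  have hcomap : (I.map α).comap β = ⊥ :=
    hσ.eq_bot ((hI.map hα).comap hβ) (Ideal.comap_ne_top β hIα_top)
  have := hσ.nontrivial
  obtain ⟨p, hp, hpx⟩ := hβ_int (α x)
  obtain ⟨i, hpi, hpi'⟩ := Ideal.exists_coeff_ne_zero_mem_comap_of_non_zero_divisor_root_mem
    (fun {y} => (mem_nonZeroDivisors_iff_right.mp hαx) y) (Ideal.mem_map_of_mem α hx) hp.ne_zero hpx
  rw [hcomap, Ideal.mem_bot] at hpi'
  exact hpi hpi'

theorem DiffSimple.not_isUnit_of_isIntegralElem {R S T : Type*} [CommRing R] [CommRing S]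
    [CommRing T] [Nontrivial T] {φ : R →+* R} {σ : S →+* S} {ψ : T →+* T} (hσ : DiffSimple σ)
    {α : R →+* T} {β : S →+* T} (hα : Semiconj α φ ψ) (hβ : Semiconj β σ ψ)
    (hα_inj : Function.Injective α) (hα_int : ∀ s, α.IsIntegralElem (β s))
    (hβ_int : ∀ r, β.IsIntegralElem (α r)) {I : Ideal R} (hI : IsDiffIdeal φ I) (hI_top : I ≠ ⊤)
    {x : R} (hx : x ∈ I) : ¬ IsUnit (α x) := fun hu => by
  let B : Subring T := α.range ⊔ β.range
  have hαB (r : R) : α r ∈ B := le_sup_left (a := α.range) ⟨r, rfl⟩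
  have hβB (s : S) : β s ∈ B := le_sup_right (b := β.range) ⟨s, rfl⟩
  have hψB : B ≤ B.comap ψ := by
    refine sup_le ?_ ?_
    · rintro _ ⟨r, rfl⟩
      exact Subring.mem_comap.mpr (hα r ▸ hαB (φ r))
    · rintro _ ⟨s, rfl⟩
      exact Subring.mem_comap.mpr (hβ s ▸ hβB (σ s))
  refine hσ.notMem_nonZeroDivisors_of_isIntegral (ψ := ψ.restrict B B hψB)
    (α := α.codRestrict B hαB) (β := β.codRestrict B hβB)
    (fun r => Subtype.ext (hα r)) (fun s => Subtype.ext (hβ s))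
    (fun r s hrs => hα_inj (congrArg Subtype.val hrs))
    (fun b => isIntegralElem_of_subring (isIntegralElem_of_mem_range_sup_range hα_int b.2))
    (fun b => isIntegralElem_of_subring (isIntegralElem_of_mem_range_sup_range hβ_int
      (sup_comm α.range β.range ▸ b.2)))
    hI hI_top hx (mem_nonZeroDivisors_of_injective B.subtype_injective hu.mem_nonZeroDivisors)

section FundamentalMatrix

open Matrix (GeneralLinearGroup)
open scoped MatrixGroups

variable {ι K R S T : Type*} [Fintype ι] [DecidableEq ι] [CommRing K] [CommRing R] [CommRing S]
  [CommRing T] [Algebra K R] [Algebra K S] [Algebra K T]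
  {φR : R →+* R} {φS : S →+* S} {ψ : T →+* T}

/-- `Y` is a fundamental solution matrix of the linear difference system `φ(y) = Ay`. -/
def IsFundamentalMatrix (φ : R →+* R) (A : GL ι K) (Y : GL ι R) : Prop :=
  GeneralLinearGroup.map φ Y = GeneralLinearGroup.map (algebraMap K R) A * Y

variable (K) in
/-- The `K`-algebra `K[Y, 1 / det Y]`. -/
def matrixAdjoin (Y : GL ι R) : Subalgebra K R :=
  Algebra.adjoin K (insert ↑(GeneralLinearGroup.det Y)⁻¹ {x | ∃ i j, Y i j = x})

theorem coe_inv_det_map (f : R →+* T) (Y : GL ι R) :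
    (↑(GeneralLinearGroup.det (GeneralLinearGroup.map f Y))⁻¹ : T) =
      f ↑(GeneralLinearGroup.det Y)⁻¹ := by
  rw [GeneralLinearGroup.map_det, ← map_inv]
  rfl

theorem matrixAdjoin_le_iff {Y : GL ι R} {B : Subalgebra K R} :
    matrixAdjoin K Y ≤ B ↔ Y ∈ (GeneralLinearGroup.map (n := ι) (B.val : B →+* R)).range := by
  rw [matrixAdjoin, Algebra.adjoin_le_iff, Set.insert_subset_iff]
  constructor
  · rintro ⟨hdet, hentry⟩
    let W : Matrix ι ι B := Matrix.of fun i j => ⟨Y i j, hentry ⟨i, j, rfl⟩⟩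
    have hW : (B.val : B →+* R).mapMatrix W = Y := rfl
    have hWdet : (W.det : R) = (Y : Matrix ι ι R).det := (B.val : B →+* R).map_det W
    have hW1 : W.det * ⟨_, hdet⟩ = 1 :=
      Subtype.ext ((congrArg (· * _) hWdet).trans (GeneralLinearGroup.det Y).mul_inv)
    exact ⟨GeneralLinearGroup.mk'' W (.of_mul_eq_one _ hW1), Units.ext hW⟩
  · rintro ⟨W, rfl⟩
    refine ⟨?_, ?_⟩
    · rw [coe_inv_det_map]
      exact Subtype.property _
    · rintro _ ⟨i, j, rfl⟩
      exact (W i j).2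

theorem map_matrixAdjoin (f : R →ₐ[K] T) (Y : GL ι R) :
    (matrixAdjoin K Y).map f = matrixAdjoin K (GeneralLinearGroup.map (f : R →+* T) Y) := by
  rw [matrixAdjoin, AlgHom.map_adjoin, matrixAdjoin, Set.image_insert_eq]
  congr 2
  · exact (coe_inv_det_map (f : R →+* T) Y).symm
  · ext t
    simp

theorem finiteType_of_matrixAdjoin_eq_top {Y : GL ι R} (hY : matrixAdjoin K Y = ⊤) :
    Algebra.FiniteType K R := by
  refine ⟨Subalgebra.fg_def.mpr ⟨_, Set.Finite.insert _ ?_, hY⟩⟩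
  refine (Set.finite_range fun ij : ι × ι => Y ij.1 ij.2).subset ?_
  rintro _ ⟨i, j, rfl⟩
  exact ⟨(i, j), rfl⟩

namespace IsFundamentalMatrix

variable {A : GL ι K}

protected theorem map {Y : GL ι R} (hY : IsFundamentalMatrix φR A Y) {f : R →ₐ[K] T}
    (hf : Semiconj f φR ψ) : IsFundamentalMatrix ψ A (GeneralLinearGroup.map (f : R →+* T) Y) := by
  have hcomp : ψ.comp (f : R →+* T) = (f : R →+* T).comp φR := RingHom.ext fun r => (hf r).symm
  rw [IsFundamentalMatrix] at hY ⊢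
  rw [← MonoidHom.comp_apply, ← GeneralLinearGroup.map_comp, hcomp, GeneralLinearGroup.map_comp,
    MonoidHom.comp_apply, hY, GeneralLinearGroup.map_mul, ← MonoidHom.comp_apply,
    ← GeneralLinearGroup.map_comp, f.comp_algebraMap]

theorem map_inv_mul {U V : GL ι T} (hU : IsFundamentalMatrix ψ A U)
    (hV : IsFundamentalMatrix ψ A V) : GeneralLinearGroup.map ψ (U⁻¹ * V) = U⁻¹ * V := by
  rw [GeneralLinearGroup.map_mul, GeneralLinearGroup.map_inv, hU, hV]
  group

theorem matrixAdjoin_le {U V : GL ι T} (hU : IsFundamentalMatrix ψ A U)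
    (hV : IsFundamentalMatrix ψ A V) {B : Subalgebra K T} (hB : ∀ c, IsFixedPt ψ c → c ∈ B)
    (hUB : matrixAdjoin K U ≤ B) : matrixAdjoin K V ≤ B := by
  have hfix := hU.map_inv_mul hV
  set Z : GL ι T := U⁻¹ * V
  have hZB : matrixAdjoin K Z ≤ B := by
    refine Algebra.adjoin_le (Set.insert_subset (hB _ ?_) ?_)
    · rw [IsFixedPt, ← coe_inv_det_map, hfix]
    · rintro _ ⟨i, j, rfl⟩
      exact hB _ (congrArg (fun W : GL ι T => W i j) hfix)
  rw [matrixAdjoin_le_iff] at hUB hZB ⊢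
  rw [← mul_inv_cancel_left U V]
  exact mul_mem hUB hZB

theorem isIntegralElem {α : R →ₐ[K] T} {β : S →ₐ[K] T} (hα : Semiconj α φR ψ)
    (hβ : Semiconj β φS ψ) {YR : GL ι R} {YS : GL ι S} (hYR : IsFundamentalMatrix φR A YR)
    (hYS : IsFundamentalMatrix φS A YS) (hS : matrixAdjoin K YS = ⊤)
    (hT : ∀ c, IsFixedPt ψ c → IsIntegral K c) (s : S) :
    (α : R →+* T).IsIntegralElem (β s) := by
  let : Algebra R T := (α : R →+* T).toAlgebra
  have : IsScalarTower K R T := .of_algebraMap_eq fun a => (α.commutes a).symm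
  let B : Subalgebra K T := (integralClosure R T).restrictScalars K
  have hαB : matrixAdjoin K (GeneralLinearGroup.map (α : R →+* T) YR) ≤ B := by
    rw [← map_matrixAdjoin]
    rintro _ ⟨r, -, rfl⟩
    exact isIntegral_algebraMap (R := R) (A := T) (x := r)
  have hβB : (⊤ : Subalgebra K S).map β ≤ B := by
    rw [← hS, map_matrixAdjoin]
    exact (hYR.map hα).matrixAdjoin_le (hYS.map hβ) (fun c hc => (hT c hc).tower_top) hαB
  exact hβB ⟨s, Algebra.mem_top, rfl⟩

theorem not_isUnit_of_mem [Nontrivial T] (hσ : DiffSimple φS) {α : R →ₐ[K] T} {β : S →ₐ[K] T}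
    (hα : Semiconj α φR ψ) (hβ : Semiconj β φS ψ) (hα_inj : Function.Injective α)
    {YR : GL ι R} {YS : GL ι S} (hYR : IsFundamentalMatrix φR A YR)
    (hYS : IsFundamentalMatrix φS A YS) (hR : matrixAdjoin K YR = ⊤) (hS : matrixAdjoin K YS = ⊤)
    (hT : ∀ c, IsFixedPt ψ c → IsIntegral K c) {I : Ideal R} (hI : IsDiffIdeal φR I)
    (hI_top : I ≠ ⊤) {x : R} (hx : x ∈ I) : ¬ IsUnit (α x) :=
  hσ.not_isUnit_of_isIntegralElem (α := (α : R →+* T)) (β := (β : S →+* T)) hα hβ hα_inj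
    (isIntegralElem hα hβ hYR hYS hS hT) (isIntegralElem hβ hα hYS hYR hR hT) hI hI_top hx

end IsFundamentalMatrix

end FundamentalMatrix

section IntegralConstants

variable {ι K R Q : Type*} [Fintype ι] [DecidableEq ι] [CommRing K] [CommRing R] [CommRing Q]
  [Algebra K R] [Algebra R Q] [Algebra K Q] [IsScalarTower K R Q]
  {φ : K →+* K} {φR : R →+* R} {Φ : Q →+* Q}

theorem PseudoField.isIntegral_of_isFixedPt {T : Type*} [CommRing T] [Algebra K T] [Algebra Q T]
    [IsScalarTower K Q T] [Algebra.FiniteType Q T] {ψ : T →+* T} (hQ : PseudoField Q Φ)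
    (hψ : DiffSimple ψ) (hΦψ : Semiconj (algebraMap Q T) Φ ψ)
    (hint : ∀ x, IsFixedPt Φ x → IsIntegral K x) {c : T} (hc : IsFixedPt ψ c) : IsIntegral K c := by
  obtain ⟨p, hp, hpΦ, hpc⟩ :=
    hQ.1.exists_monic_map_eq_self hΦψ hc (hQ.isAlgebraic_of_isFixedPt hψ hc)
  refine isIntegral_of_monic_of_coeff hp (fun n => hint _ ?_) hpc
  rw [IsFixedPt, ← coeff_map, hpΦ]

theorem PseudoDomain.diffSimple_of_forall_isIntegral [IsFractionRing R Q] (hR : PseudoDomain φR)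
    (hK : PseudoField K φ) (hφ : Semiconj (algebraMap K R) φ φR) {A : GL ι K} {Y : GL ι R}
    (hY : IsFundamentalMatrix φR A Y) (hgen : matrixAdjoin K Y = ⊤)
    (hΦ : Semiconj (algebraMap R Q) φR Φ) (hint : ∀ x, IsFixedPt Φ x → IsIntegral K x) :
    DiffSimple φR := by
  have := hK.isArtinianRing
  have := hK.1.isReduced
  have := hR.nontrivial
  have := finiteType_of_matrixAdjoin_eq_top hgen
  have : IsNoetherianRing R := Algebra.FiniteType.isNoetherianRing K R
  have hQ : PseudoField Q Φ := hR.pseudoField hΦ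
  have := hQ.1.nontrivial
  have hφΦ : Semiconj (algebraMap K Q) φ Φ := by
    rw [IsScalarTower.algebraMap_eq K R Q]
    exact hΦ.comp_left hφ
  obtain ⟨m, hm, hS⟩ := exists_diffSimple_quotient φR
  have := hS.nontrivial
  have hRS : Semiconj (Ideal.Quotient.mkₐ K m) φR (Ideal.quotientMap m φR hm) := fun _ => rfl
  obtain ⟨N, ψ, hψ, hQT, hST⟩ := exists_diffSimple_compositum (hK.1.injective_of_semiconj hφΦ) hφΦ
    (hRS.comp_left hφ : Semiconj (algebraMap K (R ⧸ m)) φ _)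
  have := hψ.nontrivial
  let α : R →ₐ[K] (Q ⊗[K] (R ⧸ m)) ⧸ N :=
    (IsScalarTower.toAlgHom K Q _).comp (IsScalarTower.toAlgHom K R Q)
  have hα_inj : Function.Injective α :=
    (hQ.1.injective_of_semiconj hQT).comp (IsFractionRing.injective R Q)
  have hgenS : matrixAdjoin K (.map (Ideal.Quotient.mkₐ K m : R →+* R ⧸ m) Y) = ⊤ := by
    rw [← map_matrixAdjoin, hgen, Algebra.map_top, AlgHom.range_eq_top]
    exact Ideal.Quotient.mkₐ_surjective K m
  refine .of_forall_eq_top fun I hI hI0 => by_contra fun hI_top => ?_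
  obtain ⟨x, hxI, hx⟩ := hR.exists_mem_nonZeroDivisors hI hI0
  refine hY.not_isUnit_of_mem hS (α := α) (hQT.comp_left hΦ) hST hα_inj (hY.map hRS) hgen hgenS
    (fun c => hQ.isIntegral_of_isFixedPt hψ hQT hint) hI hI_top hxI ?_
  exact (IsLocalization.map_units Q (⟨x, hx⟩ : nonZeroDivisors R)).map
    (algebraMap Q ((Q ⊗[K] (R ⧸ m)) ⧸ N))

end IntegralConstants

theorem DiffSimple.exists_fixed_coeff_iff_isAlgebraic {K T : Type*} [CommRing K] [CommRing T]
    [Nontrivial T] [Algebra K T] {φ : K →+* K} {ψ : T →+* T} (h : DiffSimple φ)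
    (hψ : Semiconj (algebraMap K T) φ ψ) {x : T} (hx : IsFixedPt ψ x) :
    (∃ p : T[X], p ≠ 0 ∧ (∀ m, ∃ a, φ a = a ∧ algebraMap K T a = p.coeff m) ∧ p.eval x = 0) ↔
      IsAlgebraic K x := by
  constructor
  · rintro ⟨p, hp0, hp, hpx⟩
    obtain ⟨q, rfl⟩ : p ∈ lifts (algebraMap K T) :=
      (lifts_iff_coeff_lifts p).mpr fun m => (hp m).imp fun _ => And.right
    refine ⟨q, fun hq => hp0 ?_, ?_⟩
    · rw [hq, map_zero]
    · rwa [coe_mapRingHom, eval_map_algebraMap] at hpx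
  · intro halg
    obtain ⟨p, hp, hpφ, hpx⟩ := h.exists_monic_map_eq_self hψ hx halg
    refine ⟨p.map (algebraMap K T), (hp.map _).ne_zero, fun m => ⟨p.coeff m, ?_, ?_⟩, ?_⟩
    · rw [← coeff_map, hpφ]
    · rw [coeff_map]
    · rwa [eval_map_algebraMap]

/-- Let `K` be a `φ`-pseudo field, `A ∈ GLₙ(K)`, and `R = K[Y, 1/det Y]` a `K`-`φ`-algebra
that is a `φ`-pseudo domain, where `Y` is a fundamental solution matrix of `φ(y) = Ay`.
Let `Q` be the total quotient ring of `R` with endomorphism `Φ` extending `φ_R`.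
Then `R` is `φ`-simple if and only if every `Φ`-constant of `Q` is algebraic over `K^φ`. -/
theorem diffSimple_iff_constants_algebraic
    {n : ℕ} {K R Q : Type*} [CommRing K] [CommRing R] [Algebra K R]
    [CommRing Q] [Algebra R Q] [IsLocalization (nonZeroDivisors R) Q]
    (φ : K →+* K) (hPF : PseudoField K φ)
    (A : Matrix (Fin n) (Fin n) K) (hA : IsUnit A.det)
    (φR : R →+* R) (hcomp : ∀ a : K, φR (algebraMap K R a) = algebraMap K R (φ a))
    (hdom : PseudoDomain φR)
    (Y : Matrix (Fin n) (Fin n) R) (hY : IsUnit Y.det)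
    (hsol : Y.map ⇑φR = A.map ⇑(algebraMap K R) * Y)
    (w : R) (hw : Y.det * w = 1)
    (hgen : Algebra.adjoin K (insert w {x : R | ∃ i j, Y i j = x}) = ⊤)
    (Φ : Q →+* Q) (hΦ : Φ.comp (algebraMap R Q) = (algebraMap R Q).comp φR) :
    DiffSimple φR ↔
      ∀ x : Q, Φ x = x → ∃ p : Polynomial Q, p ≠ 0 ∧
        (∀ m : ℕ, ∃ a : K, φ a = a ∧ algebraMap R Q (algebraMap K R a) = p.coeff m) ∧
        Polynomial.eval x p = 0 := by
  let : Algebra K Q := ((algebraMap R Q).comp (algebraMap K R)).toAlgebra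
  have : IsScalarTower K R Q := .of_algebraMap_eq fun _ => rfl
  have := hdom.nontrivial
  have : Nontrivial Q := (IsFractionRing.injective R Q).nontrivial
  have hKR : Semiconj (algebraMap K R) φ φR := fun a => (hcomp a).symm
  have hRQ : Semiconj (algebraMap R Q) φR Φ := fun r => (RingHom.congr_fun hΦ r).symm
  have hKQ : Semiconj (algebraMap K Q) φ Φ := hRQ.comp_left hKR
  let Y' : GL (Fin n) R := .mk'' Y hY
  have hY' : IsFundamentalMatrix φR (.mk'' A hA : GL (Fin n) K) Y' := Units.ext hsol
  have hgen' : matrixAdjoin K Y' = ⊤ := by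
    have hdet : (↑(Matrix.GeneralLinearGroup.det Y')⁻¹ : R) = w :=
      Units.inv_eq_of_mul_eq_one_right hw
    rwa [matrixAdjoin, hdet]
  have := finiteType_of_matrixAdjoin_eq_top hgen'
  constructor
  · intro hR x hx
    obtain ⟨c, hc, rfl⟩ := hR.exists_isFixedPt_algebraMap_eq le_rfl hRQ hx
    exact (hPF.1.exists_fixed_coeff_iff_isAlgebraic hKQ hx).mpr
      (hPF.isAlgebraic_of_isFixedPt hR hc).algebraMap
  · intro halg
    refine hdom.diffSimple_of_forall_isIntegral hPF hKR hY' hgen' hRQ fun x hx => ?_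
    obtain ⟨p, hp, -, hpx⟩ := hPF.1.exists_monic_map_eq_self hKQ hx
      ((hPF.1.exists_fixed_coeff_iff_isAlgebraic hKQ hx).mp (halg x hx))
    exact ⟨p, hp, hpx⟩
end

section
/- Let K be a field equipped with two commuting ring endomorphisms φ and σ such that: (i) every a ∈ K satisfying φ^m(a) = a for some m ≥ 1 already satisfies φ(a) = a (i.e., K^{φ^∞} = K^φ); and (ii) σ maps the subfield K^φ = {a ∈ K | φ(a) = a} onto itself. Let A ∈ GL_n(K). Then there exists a σ-PV ring R for φ(y) = A y such that every Φ-constant of R is algebraic over K^φ: there is a commutative K-algebra R with commuting ring endomorphisms Φ and Σ satisfying Φ(algebraMap a) = algebraMap(φ(a)) and Σ(algebraMap a) = algebraMap(σ(a)) for all a ∈ K, a matrix Y ∈ GL_n(R) with Φ applied entrywise to Y equal to (algebraMap applied entrywise to A) · Y, such that R is generated as a K-algebra by the entries of Σ^i(Y) together with (det Σ^i(Y))^{-1} for all i ≥ 0, R is Φ-simple, R is a Φ-pseudo domain, and every r ∈ R with Φ(r) = r is a root of a nonzero polynomial with coefficients in the image of K^φ. -/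
/-
Adjoin to `K` a fundamental matrix, the inverse of its determinant and all their `σ`-transforms as
unknowns, and let `φ` act through the equation and its `σ`-transforms. In the polynomial rings in
the first `i` transforms, choose maximal `φ`-stable ideals `m i` inductively. The inclusion of a
level in the next and `σ` both pull `m (i + 1)` back to `m i` by maximality, so amalgamating residue
fields over a prime above `m i` shows that the two copies of `m (i + 1)` in the following level
generate a proper ideal, which lies in some `m (i + 2)`. The union of the `m i` is again maximal
`φ`-stable, so its quotient is `φ`-simple, and `σ` acts on it.

The ring of level `i` is Noetherian, so the minimal primes above `m i` are periodic under `φ`, and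
all periodic primes above `m i` form a single orbit. An ultraproduct of residue fields yields a
prime above the union whose restriction to every level is periodic. Its periods could grow with `i`.
A second ultraproduct, over shifts by higher and higher powers of `σ`, provides points of the levels
that are compatible with `σ`, in a common field `F`. The equations imposed on one more transform
form an ascending chain of ideals in a polynomial ring over `F`. Once it is stationary, a lift of a
point to the next level is determined up to `φ` by its image under `σ`, and the periods stop
growing.

A constant of the quotient lies in a finitely generated `φ`-simple `K`-algebra, where nonzero
constants are units. If it were transcendental over `K`, then by Chevalley's theorem some monic
polynomial with constant coefficients would vanish at it modulo a prime, although its value is a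
unit. Hence it is algebraic, and by uniqueness its minimal polynomial is fixed by `φ`.
-/

open Filter Function

section StableIdeals

variable {B B' : Type*} [CommRing B] [CommRing B'] {f : B →+* B} {f' : B' →+* B'} {h : B →+* B'}
  {m p q : Ideal B}

lemma iterate_comap (f : B →+* B) (k : ℕ) : (Ideal.comap f)^[k] = Ideal.comap (f ^ k) := by
  induction k with
  | zero => exact funext fun I => (Ideal.comap_id I).symm
  | succ k ih =>
    rw [iterate_succ, ih, pow_succ']
    rfl

lemma semiconj_comap (hf : h.comp f = f'.comp h) :
    Semiconj (Ideal.comap h) (Ideal.comap f') (Ideal.comap f) := fun I => by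
  rw [Ideal.comap_comap, Ideal.comap_comap, hf]

lemma map_le_comap_map (hf : h.comp f = f'.comp h) (hp : p ≤ p.comap f) :
    p.map h ≤ (p.map h).comap f' := by
  rw [Ideal.map_le_iff_le_comap, semiconj_comap hf]
  exact hp.trans (Ideal.comap_mono Ideal.le_comap_map)

lemma iterate_eq_of_mem_periodicPts {α : Type*} [PartialOrder α] {g : α → α} (hg : Monotone g)
    {x : α} (hx : x ∈ periodicPts g) {c : ℕ} (hc : g^[c] x ≤ x) : g^[c] x = x := by
  obtain ⟨d, hd, hxd⟩ := hx
  have hanti : Antitone fun n => (g^[c])^[n] x := (hg.iterate c).antitone_iterate_of_map_le hc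
  refine hc.antisymm ?_
  calc x = (g^[c])^[d] x := by rw [← iterate_mul]; exact (hxd.const_mul c).symm
    _ ≤ (g^[c])^[1] x := hanti hd

/-- `m` is maximal among the proper ideals that are stable under `f`. -/
def IsMaximalStable (f : B →+* B) (m : Ideal B) : Prop :=
  Maximal (fun I => I ≠ ⊤ ∧ I ≤ I.comap f) m

lemma exists_le_isMaximalStable (hp : p ≠ ⊤) (hpf : p ≤ p.comap f) :
    ∃ m, p ≤ m ∧ IsMaximalStable f m := by
  refine zorn_le_nonempty₀ {I : Ideal B | I ≠ ⊤ ∧ I ≤ I.comap f}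
    (fun c hc hchain I hI => ⟨sSup c, ⟨?_, ?_⟩, fun _ => le_sSup⟩) p ⟨hp, hpf⟩
  · rw [Ideal.ne_top_iff_one, Submodule.mem_sSup_of_directed ⟨I, hI⟩ hchain.directedOn]
    rintro ⟨J, hJ, h1⟩
    exact (hc hJ).1 ((Ideal.eq_top_iff_one J).2 h1)
  · exact sSup_le fun J hJ => (hc hJ).2.trans (Ideal.comap_mono (le_sSup hJ))

namespace IsMaximalStable

lemma ne_top (hm : IsMaximalStable f m) : m ≠ ⊤ := hm.prop.1

lemma le_comap (hm : IsMaximalStable f m) : m ≤ m.comap f := hm.prop.2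

lemma eq_of_le (hm : IsMaximalStable f m) (hp : p ≠ ⊤) (hpf : p ≤ p.comap f) (hmp : m ≤ p) :
    m = p :=
  Maximal.eq_of_le hm ⟨hp, hpf⟩ hmp

lemma comap_eq (hm : IsMaximalStable f m) (hf : h.comp f = f'.comp h) {I : Ideal B'} (hI : I ≠ ⊤)
    (hIf : I ≤ I.comap f') (hmI : m ≤ I.comap h) : I.comap h = m := by
  refine (hm.eq_of_le (mt Ideal.comap_eq_top_iff.1 hI) ?_ hmI).symm
  rw [← semiconj_comap hf I]
  exact Ideal.comap_mono hIf

lemma isFixedPt (hm : IsMaximalStable f m) : IsFixedPt (Ideal.comap f) m :=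
  hm.comap_eq rfl hm.ne_top hm.le_comap hm.le_comap

lemma le_iterate_comap (hm : IsMaximalStable f m) (hmp : m ≤ p) (k : ℕ) :
    m ≤ (Ideal.comap f)^[k] p :=
  (hm.isFixedPt.iterate k).ge.trans ((Ideal.gc_map_comap f).monotone_u.iterate k hmp)

lemma iInf_iterate_comap_eq (hm : IsMaximalStable f m) (hp : p ≠ ⊤) (hmp : m ≤ p) :
    ⨅ k, (Ideal.comap f)^[k] p = m := by
  refine (hm.eq_of_le (ne_top_of_le_ne_top hp (iInf_le _ 0)) ?_
    (le_iInf (hm.le_iterate_comap hmp))).symm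
  rw [Ideal.comap_iInf]
  refine le_iInf fun k => (iInf_le _ (k + 1)).trans_eq ?_
  rw [iterate_succ_apply']

end IsMaximalStable

lemma isMaximalStable_bot_of_isField (hB : IsField B) : IsMaximalStable f ⊥ := by
  let := hB.toField
  exact ⟨⟨bot_ne_top, bot_le⟩, fun I hI _ => ((eq_bot_or_eq_top I).resolve_right hI.1).le⟩

lemma DiffSimple.isMaximalStable_bot (hf : DiffSimple f) : IsMaximalStable f ⊥ :=
  ⟨⟨hf.1, bot_le⟩, fun I hI _ => ((hf.2 I hI.2).resolve_right hI.1).le⟩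

lemma DiffSimple.isUnit_of_map_eq_self (hf : DiffSimple f) {b : B} (hb : f b = b) (hb0 : b ≠ 0) :
    IsUnit b := by
  have hstable : ∀ x ∈ Ideal.span {b}, f x ∈ Ideal.span {b} := fun x hx => by
    rw [Ideal.mem_span_singleton] at hx ⊢
    simpa only [hb] using map_dvd f hx
  exact Ideal.span_singleton_eq_top.1
    ((hf.2 _ hstable).resolve_left (mt Ideal.span_singleton_eq_bot.1 hb0))

lemma IsMaximalStable.diffSimple {Φ : B ⧸ m →+* B ⧸ m} (hm : IsMaximalStable f m)
    (hΦ : (Ideal.Quotient.mk m).comp f = Φ.comp (Ideal.Quotient.mk m)) : DiffSimple Φ := by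
  have : Nontrivial (B ⧸ m) := Ideal.Quotient.nontrivial_iff.2 hm.ne_top
  have hsurj := Ideal.Quotient.mk_surjective (I := m)
  refine ⟨bot_ne_top, fun I hI => or_iff_not_imp_right.2 fun hI' => ?_⟩
  apply Ideal.comap_injective_of_surjective _ hsurj
  rw [hm.comap_eq hΦ hI' hI (Ideal.mk_ker.ge.trans (Ideal.comap_mono bot_le)),
    ← RingHom.ker_eq_comap_bot, Ideal.mk_ker]

end StableIdeals

section PeriodicPrimes

variable {B B' : Type*} [CommRing B] [CommRing B'] {f : B →+* B} {f' : B' →+* B'} {h : B →+* B'}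
  {m P Q : Ideal B}

lemma iInf_iterate_eq_of_isPeriodicPt {α : Type*} [CompleteLattice α] {g : α → α} {x : α} {d : ℕ}
    (hd : 0 < d) (hx : IsPeriodicPt g d x) : ⨅ k, g^[k] x = ⨅ k ∈ Finset.range d, g^[k] x := by
  refine le_antisymm (le_iInf₂ fun k _ => iInf_le _ k) (le_iInf fun k => ?_)
  rw [← hx.iterate_mod_apply k]
  exact iInf₂_le _ (Finset.mem_range.2 (Nat.mod_lt k hd))

/-- A prime ideal above `m` whose orbit under pullback along `f` is periodic, i.e. a prime above
`m` that is `f ^ d`-prime for some `d ≥ 1`. -/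
structure IsPeriodicPrime (f : B →+* B) (m P : Ideal B) : Prop where
  isPrime : P.IsPrime
  le : m ≤ P
  mem_periodicPts : P ∈ periodicPts (Ideal.comap f)

namespace IsPeriodicPrime

lemma comap {m' P' : Ideal B'} (hP : IsPeriodicPrime f' m' P') (hf : h.comp f = f'.comp h)
    (hm : m ≤ m'.comap h) : IsPeriodicPrime f m (P'.comap h) where
  isPrime := hP.isPrime.comap h
  le := hm.trans (Ideal.comap_mono hP.le)
  mem_periodicPts := (semiconj_comap hf).mapsTo_periodicPts hP.mem_periodicPts

lemma iterate_comap (hP : IsPeriodicPrime f m P) (hm : IsMaximalStable f m) (k : ℕ) :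
    IsPeriodicPrime f m ((Ideal.comap f)^[k] P) where
  isPrime := by
    have := hP.isPrime
    rw [_root_.iterate_comap]
    infer_instance
  le := hm.le_iterate_comap hP.le k
  mem_periodicPts :=
    let ⟨d, hd, hPd⟩ := hP.mem_periodicPts
    ⟨d, hd, hPd.apply_iterate k⟩

lemma exists_iterate_le (hP : IsPeriodicPrime f m P) (hm : IsMaximalStable f m) (hQ : Q.IsPrime)
    (hmQ : m ≤ Q) : ∃ k, (Ideal.comap f)^[k] P ≤ Q := by
  obtain ⟨d, hd, hPd⟩ := hP.mem_periodicPts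
  have hinf : ⨅ k ∈ Finset.range d, (Ideal.comap f)^[k] P ≤ Q := by
    rwa [← iInf_iterate_eq_of_isPeriodicPt hd hPd, hm.iInf_iterate_comap_eq hP.isPrime.ne_top hP.le]
  rw [← Finset.inf_eq_iInf, hQ.inf_le'] at hinf
  exact hinf.imp fun _ => And.right

lemma exists_iterate_eq (hP : IsPeriodicPrime f m P) (hQ : IsPeriodicPrime f m Q)
    (hm : IsMaximalStable f m) : ∃ k, (Ideal.comap f)^[k] P = Q := by
  have hmono : Monotone (Ideal.comap f) := (Ideal.gc_map_comap f).monotone_u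
  obtain ⟨k, hk⟩ := hP.exists_iterate_le hm hQ.isPrime hQ.le
  obtain ⟨l, hl⟩ := hQ.exists_iterate_le hm hP.isPrime hP.le
  have hkl : (Ideal.comap f)^[k + l] Q ≤ (Ideal.comap f)^[k] P := by
    rw [iterate_add_apply]
    exact hmono.iterate k hl
  refine ⟨k, hk.antisymm ?_⟩
  rwa [iterate_eq_of_mem_periodicPts hmono hQ.mem_periodicPts (hkl.trans hk)] at hkl

lemma eq_of_le (hP : IsPeriodicPrime f m P) (hQ : IsPeriodicPrime f m Q)
    (hm : IsMaximalStable f m) (hPQ : P ≤ Q) : P = Q := by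
  obtain ⟨k, rfl⟩ := hQ.exists_iterate_eq hP hm
  exact iterate_eq_of_mem_periodicPts (Ideal.gc_map_comap f).monotone_u hQ.mem_periodicPts hPQ

lemma isPeriodicPt (hP : IsPeriodicPrime f m P) (hQ : IsPeriodicPrime f m Q)
    (hm : IsMaximalStable f m) {d : ℕ} (hPd : IsPeriodicPt (Ideal.comap f) d P) :
    IsPeriodicPt (Ideal.comap f) d Q := by
  obtain ⟨k, rfl⟩ := hP.exists_iterate_eq hQ hm
  exact hPd.apply_iterate k

lemma finite_setOf (hm : IsMaximalStable f m) : {P | IsPeriodicPrime f m P}.Finite := by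
  rcases Set.eq_empty_or_nonempty {P | IsPeriodicPrime f m P} with hempty | ⟨P, hP⟩
  · exact hempty ▸ Set.finite_empty
  obtain ⟨d, hd, hPd⟩ := hP.mem_periodicPts
  refine ((Set.finite_Iio d).image fun k => (Ideal.comap f)^[k] P).subset fun Q hQ => ?_
  obtain ⟨k, rfl⟩ := hP.exists_iterate_eq hQ hm
  exact ⟨k % d, Nat.mod_lt k hd, hPd.iterate_mod_apply k⟩

lemma pseudoDomain {Φ : B ⧸ m →+* B ⧸ m} (hP : IsPeriodicPrime f m P) (hm : IsMaximalStable f m)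
    (hΦ : (Ideal.Quotient.mk m).comp f = Φ.comp (Ideal.Quotient.mk m)) : PseudoDomain Φ := by
  obtain ⟨d, hd, hPd⟩ := hP.mem_periodicPts
  have hsurj := Ideal.Quotient.mk_surjective (I := m)
  let q : Ideal (B ⧸ m) := P.map (Ideal.Quotient.mk m)
  have hqP : q.comap (Ideal.Quotient.mk m) = P := Ideal.comap_map_mk hP.le
  have hq : q.IsPrime := by
    have := hP.isPrime
    exact Ideal.map_isPrime_of_surjective hsurj (Ideal.mk_ker.trans_le hP.le)
  have hqd : IsPeriodicPt (Ideal.comap Φ) d q := by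
    apply Ideal.comap_injective_of_surjective _ hsurj
    rw [((semiconj_comap hΦ).iterate_right d).eq, hqP, hPd.eq]
  have hbot : ⊥ = ⨅ k ∈ Finset.range d, (Ideal.comap Φ)^[k] q := by
    rw [← iInf_iterate_eq_of_isPeriodicPt hd hqd]
    exact ((hm.diffSimple hΦ).isMaximalStable_bot.iInf_iterate_comap_eq hq.ne_top bot_le).symm
  simp only [_root_.iterate_comap] at hbot
  exact ⟨d, hd, q, hq, by rw [← _root_.iterate_comap]; exact hqd, hbot⟩

end IsPeriodicPrime

namespace IsMaximalStable

lemma mem_periodicPts_of_mem_minimalPrimes [IsNoetherianRing B] (hm : IsMaximalStable f m)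
    (hP : P ∈ m.minimalPrimes) : P ∈ periodicPts (Ideal.comap f) := by
  have : Finite m.minimalPrimes := Ideal.finite_minimalPrimes_of_isNoetherianRing B m
  have hlift : ∀ p : m.minimalPrimes, ∃ q : m.minimalPrimes, (q : Ideal B).comap f = p := by
    rintro ⟨p, hp⟩
    rw [← hm.isFixedPt.eq] at hp
    obtain ⟨q, hq, hqp⟩ := Ideal.exists_minimalPrimes_comap_eq f p hp
    exact ⟨⟨q, hq⟩, hqp⟩
  choose g hg using hlift
  have hginj : Injective g := fun p q hpq => Subtype.ext (by rw [← hg p, hpq, hg q])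
  have hsemi : ∀ k p, (Ideal.comap f)^[k] (g^[k] p) = (p : Ideal B) := fun k => by
    induction k with
    | zero => exact fun _ => rfl
    | succ k ih => exact fun p => by rw [iterate_succ_apply, iterate_succ_apply', hg, ih]
  obtain ⟨d, hd, hPd⟩ := hginj.mem_periodicPts ⟨P, hP⟩
  refine ⟨d, hd, ?_⟩
  have hd' := hsemi d ⟨P, hP⟩
  rwa [hPd.eq] at hd'

lemma exists_isPeriodicPrime_mem_minimalPrimes [IsNoetherianRing B] (hm : IsMaximalStable f m) :
    ∃ P ∈ m.minimalPrimes, IsPeriodicPrime f m P :=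
  let ⟨P, hP⟩ := Ideal.nonempty_minimalPrimes hm.ne_top
  ⟨P, hP, hP.isPrime, hP.le, hm.mem_periodicPts_of_mem_minimalPrimes hP⟩

end IsMaximalStable

end PeriodicPrimes

section Ultraproducts

variable {α : Type*} {S : α → Type*} [∀ k, CommRing (S k)]

/-- The ideal of those families in a product of rings that belong to `P k` for almost all `k`. For
an ultrafilter `l` and prime ideals `P k`, it is the kernel of the map to the ultraproduct of the
residue fields of the `P k`. -/
def eventuallyIdeal (l : Filter α) (P : ∀ k, Ideal (S k)) : Ideal (∀ k, S k) where
  carrier := {x | ∀ᶠ k in l, x k ∈ P k}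
  zero_mem' := Eventually.of_forall fun k => (P k).zero_mem
  add_mem' hx hy := by
    filter_upwards [hx, hy] with k hxk hyk using (P k).add_mem hxk hyk
  smul_mem' c _ hx := by
    filter_upwards [hx] with k hxk using (P k).mul_mem_left (c k) hxk

lemma mem_eventuallyIdeal {l : Filter α} {P : ∀ k, Ideal (S k)} {x : ∀ k, S k} :
    x ∈ eventuallyIdeal l P ↔ ∀ᶠ k in l, x k ∈ P k := Iff.rfl

lemma eventuallyIdeal_isPrime (l : Ultrafilter α) {P : ∀ k, Ideal (S k)}
    (hP : ∀ k, (P k).IsPrime) : (eventuallyIdeal (l : Filter α) P).IsPrime where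
  ne_top' := by
    rw [Ideal.ne_top_iff_one, mem_eventuallyIdeal]
    exact fun h => h.exists.elim fun k hk => (hP k).one_notMem hk
  mem_or_mem' {x y} hxy := by
    rw [mem_eventuallyIdeal, mem_eventuallyIdeal, ← Ultrafilter.eventually_or]
    filter_upwards [mem_eventuallyIdeal.1 hxy] with k hk using (hP k).mem_or_mem hk

lemma IsPeriodicPrime.comap_pi_eventuallyIdeal {B : Type*} [CommRing B] {f : B →+* B}
    {m : Ideal B} (hm : IsMaximalStable f m) (l : Ultrafilter α) {P : ∀ k, Ideal (S k)}
    {g : ∀ k, B →+* S k} (hP : ∀ᶠ k in l, IsPeriodicPrime f m ((P k).comap (g k))) :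
    IsPeriodicPrime f m ((eventuallyIdeal (l : Filter α) P).comap (RingHom.pi g)) := by
  obtain ⟨Q, hQ, hPQ⟩ : ∃ Q, IsPeriodicPrime f m Q ∧ ∀ᶠ k in l, (P k).comap (g k) = Q :=
    (Ultrafilter.eventually_exists_mem_iff (IsPeriodicPrime.finite_setOf hm)).1
      (hP.mono fun k hk => ⟨_, hk, rfl⟩)
  suffices h : (eventuallyIdeal (l : Filter α) P).comap (RingHom.pi g) = Q by rwa [h]
  ext x
  calc (∀ᶠ k in l, x ∈ (P k).comap (g k)) ↔ ∀ᶠ _ in (l : Filter α), x ∈ Q :=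
        eventually_congr (hPQ.mono fun _ hk => Ideal.ext_iff.1 hk x)
    _ ↔ x ∈ Q := eventually_const

end Ultraproducts

lemma exists_field_of_comap_eq {A : Type*} {B : Type u} {C : Type v} [CommRing A] [CommRing B]
    [CommRing C] (b : A →+* B) (c : A →+* C) (P : Ideal B) (Q : Ideal C) [P.IsPrime] [Q.IsPrime]
    (h : P.comap b = Q.comap c) :
    ∃ (Ω : Type (max u v)) (_ : Field Ω) (β : B →+* Ω) (γ : C →+* Ω),
      β.comp b = γ.comp c ∧ RingHom.ker β = P ∧ RingHom.ker γ = Q := by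
  let p := P.comap b
  let i : p.ResidueField →+* P.ResidueField := Ideal.ResidueField.map p P b rfl
  let j : p.ResidueField →+* Q.ResidueField := Ideal.ResidueField.map p Q c h
  let := i.toAlgebra
  let := j.toAlgebra
  let T := TensorProduct p.ResidueField P.ResidueField Q.ResidueField
  obtain ⟨M, hM⟩ := Ideal.exists_maximal T
  let : Field (T ⧸ M) := Ideal.Quotient.field M
  let u : P.ResidueField →+* T ⧸ M :=
    (Ideal.Quotient.mk M).comp Algebra.TensorProduct.includeLeftRingHom
  let v : Q.ResidueField →+* T ⧸ M :=
    (Ideal.Quotient.mk M).comp (RingHomClass.toRingHom Algebra.TensorProduct.includeRight)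
  have huv : u.comp i = v.comp j := RingHom.ext fun x =>
    congrArg (Ideal.Quotient.mk M) (Algebra.TensorProduct.tmul_one_eq_one_tmul x)
  refine ⟨T ⧸ M, inferInstance, u.comp (algebraMap B _), v.comp (algebraMap C _), ?_, ?_, ?_⟩
  · ext x
    simpa [i, j] using RingHom.congr_fun huv (algebraMap A _ x)
  · rw [RingHom.ker_comp_of_injective _ u.injective, Ideal.ker_algebraMap_residueField]
  · rw [RingHom.ker_comp_of_injective _ v.injective, Ideal.ker_algebraMap_residueField]

section AlgebraicConstants

open Polynomial

lemma exists_basicOpen_subset_range_comap_s9 {A B : Type*} [CommRing A] [IsDomain A] [CommRing B]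
    {g : A →+* B} (hg : Injective g) (hfp : g.FinitePresentation) :
    ∃ s : A, s ≠ 0 ∧ (PrimeSpectrum.basicOpen s : Set (PrimeSpectrum A)) ⊆
      Set.range (PrimeSpectrum.comap g) := by
  obtain ⟨T, hT⟩ := PrimeSpectrum.exists_constructibleSetData_iff.2
    (PrimeSpectrum.isConstructible_range_comap hfp)
  obtain ⟨q, hq, hq0⟩ := Ideal.exists_comap_eq_of_mem_minimalPrimes_of_injective hg ⊥
    (IsDomain.minimalPrimes_eq_singleton_bot A ▸ Set.mem_singleton ⊥)
  have hgeneric : (⊥ : PrimeSpectrum A) ∈ T.toSet := by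
    rw [hT]
    exact ⟨⟨q, hq⟩, PrimeSpectrum.ext hq0⟩
  simp only [PrimeSpectrum.ConstructibleSetData.toSet, Set.mem_iUnion] at hgeneric
  obtain ⟨C, hC, hCg, hCf⟩ := hgeneric
  refine ⟨C.f, fun h => hCf ?_, fun p hp => ?_⟩
  · rw [h, PrimeSpectrum.zeroLocus_singleton_zero]
    trivial
  · rw [← hT, PrimeSpectrum.ConstructibleSetData.toSet]
    exact Set.mem_biUnion hC ⟨fun x hx => by rw [show x = 0 from hCg hx]; exact p.asIdeal.zero_mem,
      fun h => hp (h rfl)⟩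

lemma exists_monic_map_mem_asIdeal {k K : Type*} [Field k] [Field K] [Algebra k K] {s : K[X]}
    (hs : s ≠ 0) :
    ∃ h : k[X], h.Monic ∧
      ∃ p ∈ PrimeSpectrum.basicOpen s, h.map (algebraMap k K) ∈ p.asIdeal := by
  let l : AlgebraicClosure k →ₐ[k] AlgebraicClosure K := IsAlgClosed.lift
  obtain ⟨a, ha⟩ : ∃ a, aeval (l a) s ≠ 0 := by
    by_contra! hroot
    refine Set.infinite_range_of_injective l.injective ((s.rootSet_finite _).subset ?_)
    rintro _ ⟨a, rfl⟩
    exact mem_rootSet.2 ⟨hs, hroot a⟩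
  refine ⟨minpoly k a, minpoly.monic (Algebra.IsIntegral.isIntegral a),
    ⟨RingHom.ker (aeval (l a)), RingHom.ker_isPrime _⟩, ha, ?_⟩
  rw [RingHom.mem_ker, aeval_map_algebraMap, aeval_algHom_apply, minpoly.aeval, map_zero]

variable {K B : Type*} [Field K] [CommRing B] [Algebra K B] {φ : K →+* K} {f : B →+* B} {c : B}

lemma map_aeval_eq_aeval_map_of_map_eq_self
    (hf : f.comp (algebraMap K B) = (algebraMap K B).comp φ) (hc : f c = c) (p : K[X]) :
    f (aeval c p) = aeval c (p.map φ) := by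
  rw [map_aeval_eq_aeval_map hf.symm, hc]

lemma map_minpoly_eq_self [Nontrivial B]
    (hf : f.comp (algebraMap K B) = (algebraMap K B).comp φ) (hc : f c = c)
    (hint : IsIntegral K c) :
    (minpoly K c).map φ = minpoly K c := by
  refine minpoly.unique_of_degree_le_degree_minpoly K c ((minpoly.monic hint).map φ) ?_
    degree_map_le
  rw [← map_aeval_eq_aeval_map_of_map_eq_self hf hc, minpoly.aeval, map_zero]

lemma isIntegral_of_map_eq_self [Algebra.FiniteType K B]
    (hf : f.comp (algebraMap K B) = (algebraMap K B).comp φ)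
    (hunit : ∀ b, f b = b → b ≠ 0 → IsUnit b) (hc : f c = c) : IsIntegral K c := by
  by_contra htrans
  have hinj : Injective (aeval (R := K) c) :=
    transcendental_iff_injective.1 fun halg => htrans halg.isIntegral
  have hfp : ((aeval c : K[X] →ₐ[K] B) : K[X] →+* B).FinitePresentation := by
    refine RingHom.FinitePresentation.of_finiteType.1
      (RingHom.FiniteType.of_comp_finiteType (f := algebraMap K K[X]) ?_)
    rw [AlgHom.comp_algebraMap]
    exact RingHom.finiteType_algebraMap.2 inferInstance
  obtain ⟨s, hs, hrange⟩ := exists_basicOpen_subset_range_comap_s9 hinj hfp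
  -- `h(c)` is a constant contained in a prime `q`, hence zero although `c` is transcendental.
  obtain ⟨h, hmonic, p, hp, hhp⟩ :=
    exists_monic_map_mem_asIdeal (k := RingHom.eqLocusField φ (RingHom.id K)) hs
  obtain ⟨q, rfl⟩ := hrange hp
  set h' : K[X] := h.map (algebraMap _ K) with hh'
  have hconst : f (aeval c h') = aeval c h' := by
    have hmap : h'.map φ = h' := by
      ext n
      simp only [hh', coeff_map]
      exact (h.coeff n).2
    rw [map_aeval_eq_aeval_map_of_map_eq_self hf hc, hmap]
  refine q.isPrime.ne_top (Ideal.eq_top_of_isUnit_mem _ hhp (hunit _ hconst fun h0 => ?_))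
  exact (hmonic.map _).ne_zero (hinj (h0.trans (map_zero _).symm))

lemma exists_map_eq_self_aeval_eq_zero [Nontrivial B] [Algebra.FiniteType K B]
    (hf : f.comp (algebraMap K B) = (algebraMap K B).comp φ)
    (hunit : ∀ b, f b = b → b ≠ 0 → IsUnit b) (hc : f c = c) :
    ∃ p : K[X], p.Monic ∧ p.map φ = p ∧ aeval c p = 0 :=
  have hint := isIntegral_of_map_eq_self hf hunit hc
  ⟨minpoly K c, minpoly.monic hint, map_minpoly_eq_self hf hc hint, minpoly.aeval K c⟩

end AlgebraicConstants

open MvPolynomial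

/-- The system of difference equations `φ v = rhs v`, for `v : V`, whose right hand sides are
polynomials in the unknowns `V` over a ring with commuting endomorphisms `φ` and `σ`. -/
structure DifferenceSystem (K V : Type*) [CommRing K] where
  φ : K →+* K
  σ : K →+* K
  comm : φ.comp σ = σ.comp φ
  rhs : V → MvPolynomial V K

namespace DifferenceSystem

section PolynomialRings

variable {K V J J' J'' : Type*} [CommRing K] (E : DifferenceSystem K V)

/-- The homomorphism that applies `σ ^ k` to the coefficients and moves the block `j` of variables
to the block `r j`. It represents `σ ^ k` when the variables of the block `r j` stand for the `k`-th
`σ`-transforms of those of the block `j`. -/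
noncomputable def transport (k : ℕ) (r : J → J') :
    MvPolynomial (J × V) K →+* MvPolynomial (J' × V) K :=
  eval₂Hom (C.comp (E.σ ^ k)) fun x => X (r x.1, x.2)

/-- The endomorphism `φ` of the polynomial ring in which the variable `(j, v)` stands for
`σ ^ (e j) v`, so that it satisfies the `σ ^ (e j)`-transform of the equation for `v`. -/
noncomputable def phi (e : J → ℕ) : MvPolynomial (J × V) K →+* MvPolynomial (J × V) K :=
  eval₂Hom (C.comp E.φ) fun x => rename (Prod.mk x.1) (map (E.σ ^ e x.1) (E.rhs x.2))

@[simp] lemma transport_C (k : ℕ) (r : J → J') (a : K) :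
    E.transport k r (C a) = C ((E.σ ^ k) a) := eval₂Hom_C _ _ a

@[simp] lemma transport_X (k : ℕ) (r : J → J') (x : J × V) :
    E.transport k r (X x) = X (r x.1, x.2) := eval₂Hom_X' _ _ x

@[simp] lemma phi_C (e : J → ℕ) (a : K) : E.phi e (C a) = C (E.φ a) := eval₂Hom_C _ _ a

@[simp] lemma phi_X (e : J → ℕ) (x : J × V) :
    E.phi e (X x) = rename (Prod.mk x.1) (map (E.σ ^ e x.1) (E.rhs x.2)) := eval₂Hom_X' _ _ x

lemma transport_comp_transport {k k' n : ℕ} (r : J → J') (r' : J' → J'') (h : k' + k = n) :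
    (E.transport k' r').comp (E.transport k r) = E.transport n (r' ∘ r) := by
  subst h
  ext <;> simp [pow_add]

lemma transport_rename_map (k n : ℕ) (r : J → J') (j : J) (p : MvPolynomial V K) :
    E.transport k r (rename (Prod.mk j) (map (E.σ ^ n) p)) =
      rename (Prod.mk (r j)) (map (E.σ ^ (n + k)) p) := by
  induction p using MvPolynomial.induction_on with
  | C a => simp [add_comm n, pow_add]
  | add p q hp hq => simp only [map_add, hp, hq]
  | mul_X p v hp => simp only [map_mul, hp, map_X, rename_X, transport_X]

lemma transport_comp_phi {e : J → ℕ} {e' : J' → ℕ} {k : ℕ} {r : J → J'}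
    (h : ∀ j, e' (r j) = e j + k) :
    (E.transport k r).comp (E.phi e) = (E.phi e').comp (E.transport k r) := by
  have hcomm : Commute (E.σ ^ k) E.φ := (show Commute E.σ E.φ from E.comm.symm).pow_left k
  refine ringHom_ext (fun a => ?_) fun x => ?_
  · simpa using RingHom.congr_fun hcomm.eq a
  · simp [transport_rename_map, h]

lemma transport_zero (r : J → J') :
    E.transport 0 r = (rename (R := K) (Prod.map r (id : V → V))).toRingHom :=
  ringHom_ext (fun a => by simp) fun x => by simp [Prod.map]

end PolynomialRings

section Levels

variable {K V : Type*} [CommRing K] (E : DifferenceSystem K V)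

/-- The endomorphism `φ` of the polynomial ring in the unknowns and their first `i - 1`
`σ`-transforms. -/
noncomputable abbrev levelPhi (i : ℕ) : MvPolynomial (Fin i × V) K →+* MvPolynomial (Fin i × V) K :=
  E.phi Fin.val

/-- The inclusion of one level in the next. -/
noncomputable abbrev inc (i : ℕ) :
    MvPolynomial (Fin i × V) K →+* MvPolynomial (Fin (i + 1) × V) K :=
  E.transport 0 Fin.castSucc

/-- The endomorphism `σ`, restricted to a level. -/
noncomputable abbrev shift (i : ℕ) :
    MvPolynomial (Fin i × V) K →+* MvPolynomial (Fin (i + 1) × V) K :=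
  E.transport 1 Fin.succ

/-- The inclusion of a level in the polynomial ring in all `σ`-transforms of the unknowns. -/
noncomputable abbrev incl (i : ℕ) : MvPolynomial (Fin i × V) K →+* MvPolynomial (ℕ × V) K :=
  E.transport 0 Fin.val

/-- The endomorphism `φ` of the polynomial ring in all `σ`-transforms of the unknowns. -/
noncomputable abbrev limPhi : MvPolynomial (ℕ × V) K →+* MvPolynomial (ℕ × V) K :=
  E.phi id

/-- The endomorphism `σ` of the polynomial ring in all `σ`-transforms of the unknowns. -/
noncomputable abbrev limShift : MvPolynomial (ℕ × V) K →+* MvPolynomial (ℕ × V) K :=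
  E.transport 1 Nat.succ

lemma inc_comp_levelPhi (i : ℕ) :
    (E.inc i).comp (E.levelPhi i) = (E.levelPhi (i + 1)).comp (E.inc i) :=
  E.transport_comp_phi fun _ => rfl

lemma shift_comp_levelPhi (i : ℕ) :
    (E.shift i).comp (E.levelPhi i) = (E.levelPhi (i + 1)).comp (E.shift i) :=
  E.transport_comp_phi fun _ => rfl

lemma incl_comp_levelPhi (i : ℕ) :
    (E.incl i).comp (E.levelPhi i) = E.limPhi.comp (E.incl i) :=
  E.transport_comp_phi fun _ => rfl

lemma limShift_comp_limPhi : E.limShift.comp E.limPhi = E.limPhi.comp E.limShift :=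
  E.transport_comp_phi fun _ => rfl

lemma shift_comp_inc (i : ℕ) :
    (E.shift (i + 1)).comp (E.inc i) = (E.inc (i + 1)).comp (E.shift i) := by
  rw [E.transport_comp_transport _ _ rfl, E.transport_comp_transport _ _ rfl]
  rfl

lemma incl_comp_inc (i : ℕ) : (E.incl (i + 1)).comp (E.inc i) = E.incl i :=
  E.transport_comp_transport _ _ rfl

lemma incl_comp_shift (i : ℕ) : (E.incl (i + 1)).comp (E.shift i) = E.limShift.comp (E.incl i) := by
  rw [E.transport_comp_transport _ _ rfl, E.transport_comp_transport _ _ rfl]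
  rfl

lemma limShift_pow_comp_incl_comp_shift (k i : ℕ) :
    ((E.limShift ^ k).comp (E.incl (i + 1))).comp (E.shift i) =
      (E.limShift ^ (k + 1)).comp (E.incl i) := by
  rw [RingHom.comp_assoc, incl_comp_shift, pow_succ]
  rfl

lemma eventually_exists_incl_eq (x : MvPolynomial (ℕ × V) K) :
    ∀ᶠ i in atTop, ∃ y, E.incl i y = x := by
  obtain ⟨s, q, rfl⟩ := exists_finset_rename x
  filter_upwards [eventually_gt_atTop (s.sup fun w => w.1)] with i hi
  have hs : ∀ w : s, w.1.1 < i := fun w => (Finset.le_sup w.2).trans_lt hi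
  refine ⟨rename (fun w => (⟨w.1.1, hs w⟩, w.1.2)) q, ?_⟩
  rw [incl, transport_zero]
  exact rename_rename _ _ q

lemma exists_incl_leftInverse (i : ℕ) :
    ∃ g : MvPolynomial (ℕ × V) K →+* MvPolynomial (Fin i × V) K,
      g.comp (E.incl i) = RingHom.id _ := by
  have hinj : Injective (Prod.map Fin.val id : Fin i × V → ℕ × V) :=
    Fin.val_injective.prodMap injective_id
  refine ⟨(killCompl hinj).toRingHom, ?_⟩
  rw [incl, transport_zero]
  exact congrArg AlgHom.toRingHom (killCompl_comp_rename hinj)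

variable {T : Type*} [CommRing T] {i : ℕ}

lemma level_hom_ext {g g' : MvPolynomial (Fin (i + 1) × V) K →+* T}
    (h : g.comp (E.inc i) = g'.comp (E.inc i))
    (hlast : ∀ v, g (X (Fin.last i, v)) = g' (X (Fin.last i, v))) : g = g' := by
  refine ringHom_ext (fun a => by simpa using RingHom.congr_fun h (C a)) fun ⟨j, v⟩ => ?_
  induction j using Fin.lastCases with
  | last => exact hlast v
  | cast j => simpa using RingHom.congr_fun h (X (j, v))

/-- The extension of `χ` to the next level that sends the unknowns of the new block to `y`. -/
noncomputable def extend (χ : MvPolynomial (Fin i × V) K →+* T) (y : V → T) :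
    MvPolynomial (Fin (i + 1) × V) K →+* T :=
  eval₂Hom (χ.comp C) fun x =>
    Fin.snoc (α := fun _ => V → T) (fun j v => χ (X (j, v))) y x.1 x.2

lemma extend_comp_inc (χ : MvPolynomial (Fin i × V) K →+* T) (y : V → T) :
    (extend χ y).comp (E.inc i) = χ := by
  ext <;> simp [extend]

@[simp] lemma extend_X_last (χ : MvPolynomial (Fin i × V) K →+* T) (y : V → T) (v : V) :
    extend χ y (X (Fin.last i, v)) = y v := by
  simp [extend]

lemma exists_hom_comp_inc_eq_comp_shift_eq
    {α β : MvPolynomial (Fin (i + 1) × V) K →+* T}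
    (h : β.comp (E.inc i) = α.comp (E.shift i)) :
    ∃ γ : MvPolynomial (Fin (i + 1 + 1) × V) K →+* T,
      γ.comp (E.inc (i + 1)) = α ∧ γ.comp (E.shift (i + 1)) = β := by
  refine ⟨extend α fun v => β (X (Fin.last i, v)), E.extend_comp_inc _ _,
    E.level_hom_ext ?_ fun v => ?_⟩
  · rw [RingHom.comp_assoc, shift_comp_inc, ← RingHom.comp_assoc, extend_comp_inc, h]
  · rw [RingHom.comp_apply, transport_X, Fin.succ_last, extend_X_last]

end Levels

section Chains

variable {K V : Type*} [CommRing K] {E : DifferenceSystem K V} {i : ℕ}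

lemma map_inc_sup_map_shift_ne_top {p : Ideal (MvPolynomial (Fin (i + 1) × V) K)} (hp : p ≠ ⊤)
    (h : p.comap (E.inc i) = p.comap (E.shift i)) :
    p.map (E.inc (i + 1)) ⊔ p.map (E.shift (i + 1)) ≠ ⊤ := by
  obtain ⟨q, hq⟩ := Ideal.nonempty_minimalPrimes (Ideal.comap_ne_top (E.inc i) hp)
  obtain ⟨P, _, _, hPq⟩ := Ideal.exists_comap_eq_of_mem_minimalPrimes (I := p) (E.inc i) q hq
  obtain ⟨Q, _, _, hQq⟩ :=
    Ideal.exists_comap_eq_of_mem_minimalPrimes (I := p) (E.shift i) q (h ▸ hq)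
  obtain ⟨Ω, _, β, α, hβα, hβ, hα⟩ :=
    exists_field_of_comap_eq (E.inc i) (E.shift i) P Q (hPq.trans hQq.symm)
  obtain ⟨γ, hγα, hγβ⟩ := E.exists_hom_comp_inc_eq_comp_shift_eq hβα
  refine ne_top_of_le_ne_top (RingHom.ker_ne_top γ) (sup_le ?_ ?_) <;>
    rw [Ideal.map_le_iff_le_comap, RingHom.comap_ker]
  · rwa [hγα, hα]
  · rwa [hγβ, hβ]

lemma exists_isMaximalStable_le_comap_inc_le_comap_shift
    {m : Ideal (MvPolynomial (Fin i × V) K)} {m' : Ideal (MvPolynomial (Fin (i + 1) × V) K)}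
    (hm : IsMaximalStable (E.levelPhi i) m) (hm' : IsMaximalStable (E.levelPhi (i + 1)) m')
    (hinc : m ≤ m'.comap (E.inc i)) (hshift : m ≤ m'.comap (E.shift i)) :
    ∃ m'', IsMaximalStable (E.levelPhi (i + 1 + 1)) m'' ∧
      m' ≤ m''.comap (E.inc (i + 1)) ∧ m' ≤ m''.comap (E.shift (i + 1)) := by
  have hne : m'.map (E.inc (i + 1)) ⊔ m'.map (E.shift (i + 1)) ≠ ⊤ :=
    map_inc_sup_map_shift_ne_top hm'.ne_top <|
      (hm.comap_eq (E.inc_comp_levelPhi i) hm'.ne_top hm'.le_comap hinc).trans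
        (hm.comap_eq (E.shift_comp_levelPhi i) hm'.ne_top hm'.le_comap hshift).symm
  obtain ⟨m'', hle, hm''⟩ := exists_le_isMaximalStable hne <|
    sup_le
      ((map_le_comap_map (E.inc_comp_levelPhi _) hm'.le_comap).trans
        (Ideal.comap_mono le_sup_left))
      ((map_le_comap_map (E.shift_comp_levelPhi _) hm'.le_comap).trans
        (Ideal.comap_mono le_sup_right))
  exact ⟨m'', hm'', Ideal.map_le_iff_le_comap.1 (le_sup_left.trans hle),
    Ideal.map_le_iff_le_comap.1 (le_sup_right.trans hle)⟩

/-- Maximal `φ`-stable ideals in all levels that are compatible with `σ`. -/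
structure IsStableChain (E : DifferenceSystem K V) (m : ∀ i, Ideal (MvPolynomial (Fin i × V) K)) :
    Prop where
  isMaximalStable (i : ℕ) : IsMaximalStable (E.levelPhi i) (m i)
  le_comap_inc (i : ℕ) : m i ≤ (m (i + 1)).comap (E.inc i)
  le_comap_shift (i : ℕ) : m i ≤ (m (i + 1)).comap (E.shift i)

lemma exists_isStableChain {K : Type*} [Field K] (E : DifferenceSystem K V)
    {I : Ideal (MvPolynomial (Fin 1 × V) K)} (hI : I ≠ ⊤) (hIφ : I ≤ I.comap (E.levelPhi 1)) :
    ∃ m : ∀ i, Ideal (MvPolynomial (Fin i × V) K), I ≤ m 1 ∧ E.IsStableChain m := by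
  let step (i : ℕ) : Type _ := {p : Ideal (MvPolynomial (Fin i × V) K) ×
    Ideal (MvPolynomial (Fin (i + 1) × V) K) //
      (IsMaximalStable (E.levelPhi i) p.1 ∧ IsMaximalStable (E.levelPhi (i + 1)) p.2) ∧
        p.1 ≤ p.2.comap (E.inc i) ∧ p.1 ≤ p.2.comap (E.shift i)}
  have hnext (i : ℕ) (s : step i) : ∃ t : step (i + 1), t.1.1 = s.1.2 := by
    obtain ⟨⟨m, m'⟩, ⟨hm, hm'⟩, hinc, hshift⟩ := s
    obtain ⟨m'', hm'', hinc', hshift'⟩ :=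
      exists_isMaximalStable_le_comap_inc_le_comap_shift hm hm' hinc hshift
    exact ⟨⟨(m', m''), ⟨hm', hm''⟩, hinc', hshift'⟩, rfl⟩
  choose next hnext using hnext
  obtain ⟨m₁, hIm₁, hm₁⟩ := exists_le_isMaximalStable hI hIφ
  have hm₀ : IsMaximalStable (E.levelPhi 0) ⊥ := isMaximalStable_bot_of_isField
    ((isEmptyRingEquiv K (Fin 0 × V)).toMulEquiv.isField (Field.toIsField K))
  let s (i : ℕ) : step i := Nat.rec ⟨(⊥, m₁), ⟨hm₀, hm₁⟩, bot_le, bot_le⟩ next i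
  have hs (i : ℕ) : (s i).1.2 = (s (i + 1)).1.1 := (hnext i (s i)).symm
  exact ⟨fun i => (s i).1.1, hIm₁.trans (hs 0).le,
    fun i => (s i).2.1.1,
    fun i => (s i).2.2.1.trans (Ideal.comap_mono (hs i).le),
    fun i => (s i).2.2.2.trans (Ideal.comap_mono (hs i).le)⟩

variable (E) in
/-- The ideal generated by ideals of all levels. -/
noncomputable def unionIdeal (m : ∀ i, Ideal (MvPolynomial (Fin i × V) K)) :
    Ideal (MvPolynomial (ℕ × V) K) :=
  ⨆ i, (m i).map (E.incl i)

variable {m : ∀ i, Ideal (MvPolynomial (Fin i × V) K)}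

variable (E m) in
lemma le_comap_unionIdeal (i : ℕ) : m i ≤ (E.unionIdeal m).comap (E.incl i) :=
  Ideal.map_le_iff_le_comap.1 (le_iSup (fun i => (m i).map (E.incl i)) i)

namespace IsStableChain

variable (hm : E.IsStableChain m)
include hm

lemma monotone_map_incl : Monotone fun i => (m i).map (E.incl i) :=
  monotone_nat_of_le_succ fun i => by
    rw [← E.incl_comp_inc, ← Ideal.map_map]
    exact Ideal.map_mono (Ideal.map_le_iff_le_comap.2 (hm.le_comap_inc i))

lemma unionIdeal_ne_top : E.unionIdeal m ≠ ⊤ := by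
  rw [Ideal.ne_top_iff_one, unionIdeal,
    Submodule.mem_iSup_of_directed _ hm.monotone_map_incl.directed_le]
  rintro ⟨i, h1⟩
  obtain ⟨g, hg⟩ := E.exists_incl_leftInverse i
  have hmap : ((m i).map (E.incl i)).map g = m i := by rw [Ideal.map_map, hg, Ideal.map_id]
  refine (hm.isMaximalStable i).ne_top ?_
  rw [← hmap, (Ideal.eq_top_iff_one _).2 h1, Ideal.map_top]

lemma unionIdeal_le_comap_limPhi : E.unionIdeal m ≤ (E.unionIdeal m).comap E.limPhi :=
  iSup_le fun i => (map_le_comap_map (E.incl_comp_levelPhi i) (hm.isMaximalStable i).le_comap).trans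
    (Ideal.comap_mono (le_iSup (fun i => (m i).map (E.incl i)) i))

lemma unionIdeal_le_comap_limShift : E.unionIdeal m ≤ (E.unionIdeal m).comap E.limShift :=
  iSup_le fun i => by
    rw [Ideal.map_le_iff_le_comap, Ideal.comap_comap, ← E.incl_comp_shift, ← Ideal.comap_comap]
    exact (hm.le_comap_shift i).trans (Ideal.comap_mono (E.le_comap_unionIdeal m (i + 1)))

lemma comap_incl_eq {I : Ideal (MvPolynomial (ℕ × V) K)} (hI : I ≠ ⊤) (hIφ : I ≤ I.comap E.limPhi)
    (hmI : E.unionIdeal m ≤ I) (i : ℕ) : I.comap (E.incl i) = m i :=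
  (hm.isMaximalStable i).comap_eq (E.incl_comp_levelPhi i) hI hIφ
    ((E.le_comap_unionIdeal m i).trans (Ideal.comap_mono hmI))

lemma comap_incl_unionIdeal (i : ℕ) : (E.unionIdeal m).comap (E.incl i) = m i :=
  hm.comap_incl_eq hm.unionIdeal_ne_top hm.unionIdeal_le_comap_limPhi le_rfl i

lemma isMaximalStable_unionIdeal : IsMaximalStable E.limPhi (E.unionIdeal m) := by
  refine ⟨⟨hm.unionIdeal_ne_top, hm.unionIdeal_le_comap_limPhi⟩, fun I hI hmI x hx => ?_⟩
  obtain ⟨i, y, rfl⟩ := (E.eventually_exists_incl_eq x).exists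
  refine E.le_comap_unionIdeal m i ?_
  rwa [← hm.comap_incl_eq hI.1 hI.2 hmI i]

end IsStableChain

end Chains

section Points

variable {K V F Ω : Type*} [CommRing K] [CommRing F] [CommRing Ω] {i : ℕ}

/-- Evaluation of all but the last block of variables at the point `χ`. -/
noncomputable def evalInit (χ : MvPolynomial (Fin i × V) K →+* F) :
    MvPolynomial (Fin (i + 1) × V) K →+* MvPolynomial V F :=
  extend (C.comp χ) X

variable (E : DifferenceSystem K V) {χ : MvPolynomial (Fin i × V) K →+* F}
  {χ' : MvPolynomial (Fin (i + 1) × V) K →+* F}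

lemma evalInit_comp_inc : (evalInit χ).comp (E.inc i) = C.comp χ := E.extend_comp_inc _ _

lemma evalInit_comp_shift (h : χ'.comp (E.shift i) = χ) :
    (evalInit χ').comp (E.shift (i + 1)) = evalInit χ := by
  refine E.level_hom_ext ?_ fun v => ?_
  · rw [RingHom.comp_assoc, shift_comp_inc, ← RingHom.comp_assoc, evalInit_comp_inc,
      evalInit_comp_inc, RingHom.comp_assoc, h]
  · rw [RingHom.comp_apply, transport_X, Fin.succ_last, evalInit, evalInit, extend_X_last,
      extend_X_last]

lemma exists_comp_evalInit_eq {α : F →+* Ω} {β : MvPolynomial (Fin (i + 1) × V) K →+* Ω}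
    (h : α.comp χ = β.comp (E.inc i)) :
    ∃ ε : MvPolynomial V F →+* Ω, ε.comp C = α ∧ ε.comp (evalInit χ) = β := by
  let ε := eval₂Hom α fun v => β (X (Fin.last i, v))
  have hε : ε.comp C = α := RingHom.ext fun a => eval₂Hom_C _ _ a
  refine ⟨ε, hε, E.level_hom_ext ?_ fun v => ?_⟩
  · rw [RingHom.comp_assoc, evalInit_comp_inc, ← RingHom.comp_assoc, hε, h]
  · rw [RingHom.comp_apply, evalInit, extend_X_last]
    exact eval₂Hom_X' _ _ v

variable {E} {m : ∀ i, Ideal (MvPolynomial (Fin i × V) K)}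
  {χ : ∀ i, MvPolynomial (Fin i × V) K →+* F}

/-- The equations that a chain `m` imposes on the `i`-th `σ`-transforms of the unknowns when the
previous ones are given by the point `χ i`. -/
noncomputable def fiberIdeal (m : ∀ i, Ideal (MvPolynomial (Fin i × V) K))
    (χ : ∀ i, MvPolynomial (Fin i × V) K →+* F) (i : ℕ) : Ideal (MvPolynomial V F) :=
  (m (i + 1)).map (evalInit (χ i))

lemma IsStableChain.fiberIdeal_monotone (hm : E.IsStableChain m)
    (hχ : ∀ i, (χ (i + 1)).comp (E.shift i) = χ i) : Monotone (fiberIdeal m χ) :=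
  monotone_nat_of_le_succ fun i => by
    rw [fiberIdeal, ← E.evalInit_comp_shift (hχ i), ← Ideal.map_map]
    exact Ideal.map_mono (Ideal.map_le_iff_le_comap.2 (hm.le_comap_shift (i + 1)))

lemma exists_comp_shift_eq_of_fiberIdeal_eq (hχ : ∀ i, (χ (i + 1)).comp (E.shift i) = χ i)
    (hfiber : fiberIdeal m χ (i + 1) = fiberIdeal m χ i) {α : F →+* Ω}
    {β : MvPolynomial (Fin (i + 1) × V) K →+* Ω} (hβα : α.comp (χ i) = β.comp (E.inc i))
    (hβ : m (i + 1) ≤ RingHom.ker β) :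
    ∃ β' : MvPolynomial (Fin (i + 1 + 1) × V) K →+* Ω, β'.comp (E.shift (i + 1)) = β ∧
      β'.comp (E.inc (i + 1)) = α.comp (χ (i + 1)) ∧ m (i + 1 + 1) ≤ RingHom.ker β' := by
  obtain ⟨ε, hεα, hεβ⟩ := E.exists_comp_evalInit_eq hβα
  have hker : fiberIdeal m χ i ≤ RingHom.ker ε := by
    rwa [fiberIdeal, Ideal.map_le_iff_le_comap, RingHom.comap_ker, hεβ]
  refine ⟨ε.comp (evalInit (χ (i + 1))), ?_, ?_, ?_⟩
  · rw [RingHom.comp_assoc, E.evalInit_comp_shift (hχ i), hεβ]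
  · rw [RingHom.comp_assoc, evalInit_comp_inc, ← RingHom.comp_assoc, hεα]
  · rwa [← RingHom.comap_ker, ← Ideal.map_le_iff_le_comap, ← fiberIdeal, hfiber]

end Points

section PeriodicPoints

variable {K V F : Type*} [CommRing K] [Field F] {E : DifferenceSystem K V}
  {m : ∀ i, Ideal (MvPolynomial (Fin i × V) K)} {χ : ∀ i, MvPolynomial (Fin i × V) K →+* F} {i : ℕ}

/-- A family of points of the levels of a chain whose kernels are periodic primes. It is compatible
with `σ`, but the point `χ (i + 1)` need not extend the point `χ i`. -/
structure IsPeriodicPoint (E : DifferenceSystem K V)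
    (m : ∀ i, Ideal (MvPolynomial (Fin i × V) K))
    (χ : ∀ i, MvPolynomial (Fin i × V) K →+* F) : Prop where
  comp_shift (i : ℕ) : (χ (i + 1)).comp (E.shift i) = χ i
  isPeriodicPrime_ker (i : ℕ) : IsPeriodicPrime (E.levelPhi i) (m i) (RingHom.ker (χ i))

namespace IsPeriodicPoint

variable (hχ : E.IsPeriodicPoint m χ) (hm : E.IsStableChain m)
include hχ hm

lemma exists_comap_shift_eq_of_fiberIdeal_eq (hfiber : fiberIdeal m χ (i + 1) = fiberIdeal m χ i)
    {Q : Ideal (MvPolynomial (Fin (i + 1) × V) K)}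
    (hQ : IsPeriodicPrime (E.levelPhi (i + 1)) (m (i + 1)) Q)
    (hQχ : Q.comap (E.inc i) = RingHom.ker (χ i)) :
    ∃ M, IsPeriodicPrime (E.levelPhi (i + 1 + 1)) (m (i + 1 + 1)) M ∧
      M.comap (E.shift (i + 1)) = Q ∧ M.comap (E.inc (i + 1)) = RingHom.ker (χ (i + 1)) := by
  have := hQ.isPrime
  obtain ⟨Ω, _, α, β, hαβ, -, hβ⟩ := exists_field_of_comap_eq (χ i) (E.inc i) ⊥ Q hQχ.symm
  obtain ⟨β', hβ'shift, hβ'inc, hβ'⟩ :=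
    exists_comp_shift_eq_of_fiberIdeal_eq hχ.comp_shift hfiber hαβ (hβ ▸ hQ.le)
  obtain ⟨k, hk⟩ := (hχ.isPeriodicPrime_ker _).exists_iterate_le (hm.isMaximalStable _)
    (RingHom.ker_isPrime β') hβ'
  have hM := (hχ.isPeriodicPrime_ker (i + 1 + 1)).iterate_comap (hm.isMaximalStable _) k
  refine ⟨_, hM, ?_, ?_⟩
  · refine (hM.comap (E.shift_comp_levelPhi _) (hm.le_comap_shift _)).eq_of_le hQ
      (hm.isMaximalStable _) ((Ideal.comap_mono hk).trans_eq ?_)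
    rw [RingHom.comap_ker, hβ'shift, hβ]
  · refine (hM.comap (E.inc_comp_levelPhi _) (hm.le_comap_inc _)).eq_of_le
      (hχ.isPeriodicPrime_ker _) (hm.isMaximalStable _) ((Ideal.comap_mono hk).trans_eq ?_)
    rw [RingHom.comap_ker, hβ'inc, RingHom.ker_comp_of_injective _ α.injective]

lemma eq_of_comap_inc_eq (hfiber : fiberIdeal m χ (i + 1) = fiberIdeal m χ i)
    {Q Q' : Ideal (MvPolynomial (Fin (i + 1) × V) K)}
    (hQ : IsPeriodicPrime (E.levelPhi (i + 1)) (m (i + 1)) Q)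
    (hQχ : Q.comap (E.inc i) = RingHom.ker (χ i))
    (hQ' : IsPeriodicPrime (E.levelPhi (i + 1)) (m (i + 1)) Q')
    (hQχ' : Q'.comap (E.inc i) = RingHom.ker (χ i)) : Q' = Q := by
  -- A power of `φ` maps `M` to `M'`, hence `Q` to `Q'`. It fixes `ker (χ (i + 1))` and therefore
  -- all periodic primes of that level, as these form a single orbit.
  obtain ⟨M, hM, rfl, hMχ⟩ := hχ.exists_comap_shift_eq_of_fiberIdeal_eq hm hfiber hQ hQχ
  obtain ⟨M', hM', rfl, hMχ'⟩ := hχ.exists_comap_shift_eq_of_fiberIdeal_eq hm hfiber hQ' hQχ'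
  obtain ⟨k, rfl⟩ := hM.exists_iterate_eq hM' (hm.isMaximalStable _)
  rw [((semiconj_comap (E.inc_comp_levelPhi _)).iterate_right k).eq, hMχ] at hMχ'
  rw [((semiconj_comap (E.shift_comp_levelPhi _)).iterate_right k).eq]
  exact (hχ.isPeriodicPrime_ker _).isPeriodicPt hQ (hm.isMaximalStable _) hMχ'

lemma isPeriodicPt_ker_succ (hfiber : fiberIdeal m χ (i + 1) = fiberIdeal m χ i) {d : ℕ}
    (hd : IsPeriodicPt (Ideal.comap (E.levelPhi i)) d (RingHom.ker (χ i))) :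
    IsPeriodicPt (Ideal.comap (E.levelPhi (i + 1))) d (RingHom.ker (χ (i + 1))) := by
  have hP := hχ.isPeriodicPrime_ker (i + 1)
  have hsemi := semiconj_comap (E.inc_comp_levelPhi i)
  obtain ⟨k, hk⟩ := (hP.comap (E.inc_comp_levelPhi i) (hm.le_comap_inc i)).exists_iterate_eq
    (hχ.isPeriodicPrime_ker i) (hm.isMaximalStable i)
  rw [← (hsemi.iterate_right k).eq] at hk
  have hQ := hP.iterate_comap (hm.isMaximalStable _) k
  refine hQ.isPeriodicPt hP (hm.isMaximalStable _) <|
    hχ.eq_of_comap_inc_eq hm hfiber hQ hk (hQ.iterate_comap (hm.isMaximalStable _) d) ?_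
  rw [(hsemi.iterate_right d).eq, hk, hd.eq]

lemma exists_eventually_isPeriodicPt_ker [Finite V] :
    ∃ d, 0 < d ∧ ∀ᶠ i in atTop,
      IsPeriodicPt (Ideal.comap (E.levelPhi i)) d (RingHom.ker (χ i)) := by
  obtain ⟨N, hN⟩ := monotone_stabilizes_iff_noetherian.2
    (inferInstanceAs (IsNoetherianRing (MvPolynomial V F)))
    ⟨fiberIdeal m χ, hm.fiberIdeal_monotone hχ.comp_shift⟩
  obtain ⟨d, hd, hNd⟩ := (hχ.isPeriodicPrime_ker N).mem_periodicPts
  refine ⟨d, hd, eventually_atTop.2 ⟨N, fun i hi => ?_⟩⟩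
  induction i, hi using Nat.le_induction with
  | base => exact hNd
  | succ i hi ih =>
    exact hχ.isPeriodicPt_ker_succ hm ((hN _ (hi.trans i.le_succ)).symm.trans (hN i hi)) ih

end IsPeriodicPoint

end PeriodicPoints

namespace IsStableChain

section Restriction

variable {K V : Type*} [CommRing K] {E : DifferenceSystem K V}
  {m : ∀ i, Ideal (MvPolynomial (Fin i × V) K)} {i j k : ℕ} {P : Ideal (MvPolynomial (ℕ × V) K)}

lemma isPeriodicPrime_comap_incl_of_le (hm : E.IsStableChain m) (hij : i ≤ j)
    (hP : IsPeriodicPrime (E.levelPhi j) (m j) (P.comap (E.incl j))) :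
    IsPeriodicPrime (E.levelPhi i) (m i) (P.comap (E.incl i)) := by
  induction j, hij using Nat.le_induction with
  | base => exact hP
  | succ j hij ih =>
    refine ih ?_
    rw [← E.incl_comp_inc, ← Ideal.comap_comap]
    exact hP.comap (E.inc_comp_levelPhi j) (hm.le_comap_inc j)

lemma isPeriodicPrime_comap_limShift_pow_comp_incl (hm : E.IsStableChain m)
    (hP : IsPeriodicPrime (E.levelPhi (i + k)) (m (i + k)) (P.comap (E.incl (i + k)))) :
    IsPeriodicPrime (E.levelPhi i) (m i) (P.comap ((E.limShift ^ k).comp (E.incl i))) := by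
  induction k generalizing i with
  | zero => exact hP
  | succ k ih =>
    rw [← add_assoc, add_right_comm] at hP
    rw [← E.limShift_pow_comp_incl_comp_shift, ← Ideal.comap_comap]
    exact (ih hP).comap (E.shift_comp_levelPhi i) (hm.le_comap_shift i)

end Restriction

variable {K : Type u} {V : Type v} [Field K] [Finite V] {E : DifferenceSystem K V}
  {m : ∀ i, Ideal (MvPolynomial (Fin i × V) K)}

lemma exists_isPrime_isPeriodicPrime_comap_incl (hm : E.IsStableChain m) (i : ℕ) :
    ∃ P : Ideal (MvPolynomial (ℕ × V) K), P.IsPrime ∧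
      IsPeriodicPrime (E.levelPhi i) (m i) (P.comap (E.incl i)) := by
  obtain ⟨p, hp, hper⟩ := (hm.isMaximalStable i).exists_isPeriodicPrime_mem_minimalPrimes
  rw [← hm.comap_incl_unionIdeal i] at hp
  obtain ⟨P, hP, -, rfl⟩ := Ideal.exists_comap_eq_of_mem_minimalPrimes (E.incl i) p hp
  exact ⟨P, hP, hper⟩

lemma exists_isPrime_forall_isPeriodicPrime_comap_incl (hm : E.IsStableChain m) :
    ∃ P : Ideal (MvPolynomial (ℕ × V) K), P.IsPrime ∧
      ∀ i, IsPeriodicPrime (E.levelPhi i) (m i) (P.comap (E.incl i)) := by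
  choose P hP hper using hm.exists_isPrime_isPeriodicPrime_comap_incl
  let I := eventuallyIdeal (hyperfilter ℕ) P
  have hI : I.IsPrime := eventuallyIdeal_isPrime (hyperfilter ℕ) hP
  refine ⟨I.comap (RingHom.pi fun _ => RingHom.id _), inferInstance, fun i =>
    IsPeriodicPrime.comap_pi_eventuallyIdeal (hm.isMaximalStable i) _ (g := fun _ => E.incl i) ?_⟩
  filter_upwards [Nat.hyperfilter_le_atTop (eventually_ge_atTop i)] with k hk
  exact hm.isPeriodicPrime_comap_incl_of_le hk (hper k)

lemma exists_isPeriodicPoint (hm : E.IsStableChain m) :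
    ∃ (F : Type (max u v)) (_ : Field F) (χ : ∀ i, MvPolynomial (Fin i × V) K →+* F),
      E.IsPeriodicPoint m χ := by
  choose P hP hper using hm.exists_isPrime_isPeriodicPrime_comap_incl
  let I := eventuallyIdeal (hyperfilter ℕ) P
  have hI : I.IsPrime := eventuallyIdeal_isPrime (hyperfilter ℕ) hP
  -- `χ i` is the limit, for `k → ∞`, of `σ ^ (k - i)` followed by a point of the level `k`, so that
  -- compatibility with `σ` is an equality for all `k > i`.
  let g (i k : ℕ) := (E.limShift ^ (k - i)).comp (E.incl i)
  refine ⟨I.ResidueField, inferInstance,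
    fun i => (algebraMap _ I.ResidueField).comp (RingHom.pi (g i)), fun i => ?_, fun i => ?_⟩
  · refine RingHom.ext fun x => ?_
    rw [← sub_eq_zero]
    simp only [RingHom.comp_apply, ← map_sub, Ideal.algebraMap_residueField_eq_zero]
    filter_upwards [Nat.hyperfilter_le_atTop (eventually_gt_atTop i)] with k hk
    have hgk : (g (i + 1) k).comp (E.shift i) = g i k := by
      rw [limShift_pow_comp_incl_comp_shift, ← Nat.sub_sub,
        Nat.sub_add_cancel (Nat.sub_pos_of_lt hk)]
    rw [Pi.sub_apply, RingHom.pi_apply, ← RingHom.comp_apply, hgk]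
    simp
  · rw [← RingHom.comap_ker, Ideal.ker_algebraMap_residueField]
    refine IsPeriodicPrime.comap_pi_eventuallyIdeal (hm.isMaximalStable i) _ ?_
    filter_upwards [Nat.hyperfilter_le_atTop (eventually_ge_atTop i)] with k hk
    refine hm.isPeriodicPrime_comap_limShift_pow_comp_incl ?_
    rw [Nat.add_sub_cancel' hk]
    exact hper k

lemma exists_isPeriodicPrime_unionIdeal (hm : E.IsStableChain m) :
    ∃ P, IsPeriodicPrime E.limPhi (E.unionIdeal m) P := by
  obtain ⟨P, hP, hper⟩ := hm.exists_isPrime_forall_isPeriodicPrime_comap_incl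
  obtain ⟨F, _, χ, hχ⟩ := hm.exists_isPeriodicPoint
  obtain ⟨d, hd, hker⟩ := hχ.exists_eventually_isPeriodicPt_ker hm
  refine ⟨P, hP, iSup_le fun i => Ideal.map_le_iff_le_comap.2 (hper i).le, d, hd,
    Ideal.ext fun x => ?_⟩
  obtain ⟨i, ⟨y, rfl⟩, hi⟩ := ((E.eventually_exists_incl_eq x).and hker).exists
  have hPi := (hχ.isPeriodicPrime_ker i).isPeriodicPt (hper i) (hm.isMaximalStable i) hi
  rw [← Ideal.mem_comap, ((semiconj_comap (E.incl_comp_levelPhi i)).iterate_right d).eq, hPi.eq,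
    Ideal.mem_comap]

end IsStableChain

lemma adjoin_range_mk_X {ι K : Type*} [CommRing K] (I : Ideal (MvPolynomial ι K)) :
    Algebra.adjoin K (Set.range fun x => Ideal.Quotient.mk I (X x)) = ⊤ := by
  have h := congrArg (Subalgebra.map (Ideal.Quotient.mkₐ K I)) (adjoin_range_X (R := K) (σ := ι))
  rw [AlgHom.map_adjoin, ← Set.range_comp, Algebra.map_top,
    (AlgHom.range_eq_top _).2 (Ideal.Quotient.mkₐ_surjective K I)] at h
  exact h

namespace IsStableChain

section CommRing

variable {K V : Type*} [CommRing K] {E : DifferenceSystem K V}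
  {m : ∀ i, Ideal (MvPolynomial (Fin i × V) K)} (hm : E.IsStableChain m)

/-- The endomorphism `φ` of the quotient by the ideal generated by a chain. -/
noncomputable def quotientPhi :
    MvPolynomial (ℕ × V) K ⧸ E.unionIdeal m →+* MvPolynomial (ℕ × V) K ⧸ E.unionIdeal m :=
  Ideal.quotientMap _ E.limPhi hm.unionIdeal_le_comap_limPhi

/-- The endomorphism `σ` of the quotient by the ideal generated by a chain. -/
noncomputable def quotientShift :
    MvPolynomial (ℕ × V) K ⧸ E.unionIdeal m →+* MvPolynomial (ℕ × V) K ⧸ E.unionIdeal m :=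
  Ideal.quotientMap _ E.limShift hm.unionIdeal_le_comap_limShift

lemma quotientPhi_mk (x : MvPolynomial (ℕ × V) K) :
    hm.quotientPhi (Ideal.Quotient.mk _ x) = Ideal.Quotient.mk _ (E.limPhi x) :=
  Ideal.quotientMap_mk

lemma quotientShift_mk (x : MvPolynomial (ℕ × V) K) :
    hm.quotientShift (Ideal.Quotient.mk _ x) = Ideal.Quotient.mk _ (E.limShift x) :=
  Ideal.quotientMap_mk

lemma mk_comp_limPhi : (Ideal.Quotient.mk (E.unionIdeal m)).comp E.limPhi =
    hm.quotientPhi.comp (Ideal.Quotient.mk _) :=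
  RingHom.ext fun x => (hm.quotientPhi_mk x).symm

lemma quotientPhi_comp_quotientShift :
    hm.quotientPhi.comp hm.quotientShift = hm.quotientShift.comp hm.quotientPhi := by
  refine Ideal.Quotient.ringHom_ext (RingHom.ext fun x => ?_)
  simp only [RingHom.comp_apply, quotientPhi_mk, quotientShift_mk]
  rw [← RingHom.comp_apply E.limShift, limShift_comp_limPhi, RingHom.comp_apply]

lemma quotientPhi_algebraMap (a : K) :
    hm.quotientPhi (algebraMap K _ a) = algebraMap K _ (E.φ a) :=
  (hm.quotientPhi_mk (C a)).trans (congrArg _ (E.phi_C id a))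

lemma quotientShift_algebraMap (a : K) :
    hm.quotientShift (algebraMap K _ a) = algebraMap K _ (E.σ a) :=
  (hm.quotientShift_mk (C a)).trans (congrArg _ (E.transport_C 1 Nat.succ a))

lemma iterate_quotientShift_mk_X (i : ℕ) (v : V) :
    hm.quotientShift^[i] (Ideal.Quotient.mk _ (X (0, v))) = Ideal.Quotient.mk _ (X (i, v)) := by
  induction i with
  | zero => rfl
  | succ i ih => rw [iterate_succ_apply', ih, quotientShift_mk, transport_X]

lemma diffSimple_quotientPhi : DiffSimple hm.quotientPhi :=
  hm.isMaximalStable_unionIdeal.diffSimple hm.mk_comp_limPhi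

end CommRing

variable {K : Type u} {V : Type v} [Field K] [Finite V] {E : DifferenceSystem K V}
  {m : ∀ i, Ideal (MvPolynomial (Fin i × V) K)} (hm : E.IsStableChain m)

lemma pseudoDomain_quotientPhi : PseudoDomain hm.quotientPhi :=
  let ⟨_, hP⟩ := hm.exists_isPeriodicPrime_unionIdeal
  hP.pseudoDomain hm.isMaximalStable_unionIdeal hm.mk_comp_limPhi

lemma exists_map_eq_self_aeval_eq_zero {r : MvPolynomial (ℕ × V) K ⧸ E.unionIdeal m}
    (hr : hm.quotientPhi r = r) :
    ∃ p : Polynomial K, p.Monic ∧ p.map E.φ = p ∧ Polynomial.aeval r p = 0 := by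
  obtain ⟨x, rfl⟩ := Ideal.Quotient.mk_surjective r
  obtain ⟨i, y, rfl⟩ := (E.eventually_exists_incl_eq x).exists
  let f := Ideal.quotientMap (m i) (E.levelPhi i) (hm.isMaximalStable i).le_comap
  let j := Ideal.quotientMap (E.unionIdeal m) (E.incl i) (E.le_comap_unionIdeal m i)
  have hj : Injective j := Ideal.quotientMap_injective' (hm.comap_incl_unionIdeal i).le
  have hf : (Ideal.Quotient.mk (m i)).comp (E.levelPhi i) = f.comp (Ideal.Quotient.mk (m i)) :=
    (Ideal.quotientMap_comp_mk _).symm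
  have hsimple : DiffSimple f := (hm.isMaximalStable i).diffSimple hf
  have : Nontrivial (MvPolynomial (Fin i × V) K ⧸ m i) :=
    Ideal.Quotient.nontrivial_iff.2 (hm.isMaximalStable i).ne_top
  have hfixed : f (Ideal.Quotient.mk (m i) y) = Ideal.Quotient.mk (m i) y := hj <|
    calc j (f (Ideal.Quotient.mk (m i) y))
        = Ideal.Quotient.mk _ (((E.incl i).comp (E.levelPhi i)) y) := rfl
      _ = hm.quotientPhi (Ideal.Quotient.mk _ (E.incl i y)) := by
        rw [incl_comp_levelPhi, quotientPhi_mk, RingHom.comp_apply]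
      _ = j (Ideal.Quotient.mk (m i) y) := hr
  have hK : f.comp (algebraMap K _) = (algebraMap K _).comp E.φ :=
    RingHom.ext fun a => congrArg (Ideal.Quotient.mk (m i)) (E.phi_C Fin.val a)
  have hjK : j.comp (algebraMap K _) = algebraMap K _ :=
    RingHom.ext fun a => congrArg (Ideal.Quotient.mk _) (E.transport_C 0 Fin.val a)
  obtain ⟨p, hp, hpφ, hpy⟩ := _root_.exists_map_eq_self_aeval_eq_zero hK
    (fun b hb hb0 => hsimple.isUnit_of_map_eq_self hb hb0) hfixed
  refine ⟨p, hp, hpφ, ?_⟩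
  have h := congrArg j hpy
  rwa [map_zero, Polynomial.aeval_def, Polynomial.hom_eval₂, hjK] at h

end IsStableChain

section PicardVessiot

open Matrix

variable {K ι J J' : Type*} [CommRing K]

variable (K ι) in
/-- The matrix whose entries are the unknowns `Sum.inl (p, q)` of the block `j`. -/
noncomputable def genericMatrix (j : J) :
    Matrix ι ι (MvPolynomial (J × ((ι × ι) ⊕ Unit)) K) :=
  Matrix.of fun p q => X (j, Sum.inl (p, q))

lemma map_transport_genericMatrix (E : DifferenceSystem K ((ι × ι) ⊕ Unit)) (k : ℕ) (r : J → J')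
    (j : J) : (genericMatrix K ι j).map (E.transport k r) = genericMatrix K ι (r j) :=
  Matrix.ext fun _ _ => E.transport_X k r _

lemma IsStableChain.map_iterate_quotientShift_genericMatrix
    {E : DifferenceSystem K ((ι × ι) ⊕ Unit)}
    {m : ∀ i, Ideal (MvPolynomial (Fin i × ((ι × ι) ⊕ Unit)) K)} (hm : E.IsStableChain m) (i : ℕ) :
    ((genericMatrix K ι 0).map (Ideal.Quotient.mk (E.unionIdeal m))).map hm.quotientShift^[i] =
      (genericMatrix K ι i).map (Ideal.Quotient.mk (E.unionIdeal m)) :=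
  Matrix.ext fun p q => hm.iterate_quotientShift_mk_X i (Sum.inl (p, q))

lemma adjoin_genericMatrix_union_range (I : Ideal (MvPolynomial (J × ((ι × ι) ⊕ Unit)) K)) :
    Algebra.adjoin K
      ({x | ∃ j p q, (genericMatrix K ι j).map (Ideal.Quotient.mk I) p q = x} ∪
        Set.range fun j => Ideal.Quotient.mk I (X (j, Sum.inr ()))) = ⊤ := by
  refine top_le_iff.1 ((adjoin_range_mk_X I).ge.trans (Algebra.adjoin_mono ?_))
  rintro _ ⟨⟨j, ⟨p, q⟩ | ⟨⟩⟩, rfl⟩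
  · exact Or.inl ⟨j, p, q, rfl⟩
  · exact Or.inr ⟨j, rfl⟩

variable [Fintype ι] [DecidableEq ι]

section DetRelation

variable (K ι) in
/-- The polynomial expressing that the unknown `Sum.inr ()` of the block `j` is inverse to the
determinant of the generic matrix. -/
noncomputable def detRelation (j : J) : MvPolynomial (J × ((ι × ι) ⊕ Unit)) K :=
  (genericMatrix K ι j).det * X (j, Sum.inr ()) - 1

lemma span_detRelation_ne_top [Nontrivial K] (j : J) : Ideal.span {detRelation K ι j} ≠ ⊤ := by
  let g : MvPolynomial (J × ((ι × ι) ⊕ Unit)) K →+* K :=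
    eval fun x => Sum.elim (fun pq => (1 : Matrix ι ι K) pq.1 pq.2) 1 x.2
  have hdet : g (genericMatrix K ι j).det = 1 := by
    rw [RingHom.map_det, ← det_one (R := K) (n := ι)]
    congr 1
    ext p q
    exact eval_X _
  have hg : detRelation K ι j ∈ RingHom.ker g := by
    simp [RingHom.mem_ker, detRelation, hdet, g]
  exact ne_top_of_le_ne_top (RingHom.ker_ne_top g) ((Ideal.span_singleton_le_iff_mem _).2 hg)

lemma transport_detRelation (E : DifferenceSystem K ((ι × ι) ⊕ Unit)) (k : ℕ) (r : J → J')
    (j : J) : E.transport k r (detRelation K ι j) = detRelation K ι (r j) := by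
  rw [detRelation, map_sub, map_mul, map_one, RingHom.map_det, RingHom.mapMatrix_apply,
    map_transport_genericMatrix, transport_X, detRelation]

lemma det_map_mk_genericMatrix_mul_eq_one {I : Ideal (MvPolynomial (J × ((ι × ι) ⊕ Unit)) K)}
    {j : J} (h : detRelation K ι j ∈ I) :
    ((genericMatrix K ι j).map (Ideal.Quotient.mk I)).det *
      Ideal.Quotient.mk I (X (j, Sum.inr ())) = 1 := by
  rw [← RingHom.mapMatrix_apply, ← RingHom.map_det, ← map_mul,
    ← map_one (Ideal.Quotient.mk I), Ideal.Quotient.mk_eq_mk_iff_sub_mem]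
  exact h

lemma IsStableChain.detRelation_mem_unionIdeal {E : DifferenceSystem K ((ι × ι) ⊕ Unit)}
    {m : ∀ i, Ideal (MvPolynomial (Fin i × ((ι × ι) ⊕ Unit)) K)} (hm : E.IsStableChain m)
    (h : detRelation K ι 0 ∈ m 1) (i : ℕ) : detRelation K ι i ∈ E.unionIdeal m := by
  induction i with
  | zero =>
    simpa only [Ideal.mem_comap, transport_detRelation, Fin.val_zero]
      using E.le_comap_unionIdeal m 1 h
  | succ i ih =>
    simpa only [Ideal.mem_comap, transport_detRelation] using hm.unionIdeal_le_comap_limShift ih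

end DetRelation

/-- The system `φ(Y) = A Y`, `φ(w) = (det A)⁻¹ w` for a matrix `Y` and the inverse `w` of its
determinant. -/
noncomputable def picardVessiot (φ σ : K →+* K) (hcomm : φ.comp σ = σ.comp φ)
    (A : Matrix ι ι K) : DifferenceSystem K ((ι × ι) ⊕ Unit) where
  φ := φ
  σ := σ
  comm := hcomm
  rhs := Sum.elim (fun x => ∑ r, C (A x.1 r) * X (Sum.inl (r, x.2)))
    fun _ => C (Ring.inverse A.det) * X (Sum.inr ())

section

variable {φ σ : K →+* K} {hcomm : φ.comp σ = σ.comp φ} {A : Matrix ι ι K}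

lemma map_phi_genericMatrix (e : J → ℕ) (j : J) :
    (genericMatrix K ι j).map ((picardVessiot φ σ hcomm A).phi e) =
      (A.map (σ ^ e j)).map C * genericMatrix K ι j := by
  ext1 p q
  simp [genericMatrix, picardVessiot, Matrix.mul_apply]

lemma phi_detRelation (hA : IsUnit A.det) (e : J → ℕ) (j : J) :
    (picardVessiot φ σ hcomm A).phi e (detRelation K ι j) = detRelation K ι j := by
  have hdet : (picardVessiot φ σ hcomm A).phi e (genericMatrix K ι j).det =
      C ((σ ^ e j) A.det) * (genericMatrix K ι j).det := by
    simp only [RingHom.map_det, RingHom.mapMatrix_apply, map_phi_genericMatrix, det_mul]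
  have hinv : (picardVessiot φ σ hcomm A).phi e (X (j, Sum.inr ())) =
      C ((σ ^ e j) (Ring.inverse A.det)) * X (j, Sum.inr ()) := by
    simp [picardVessiot]
  rw [detRelation, map_sub, map_mul, map_one, hdet, hinv, mul_mul_mul_comm, ← C_mul, ← map_mul,
    Ring.mul_inverse_cancel _ hA, map_one, C_1, one_mul]

lemma span_detRelation_le_comap_phi (hA : IsUnit A.det) (e : J → ℕ) (j : J) :
    Ideal.span {detRelation K ι j} ≤
      (Ideal.span {detRelation K ι j}).comap ((picardVessiot φ σ hcomm A).phi e) := by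
  rw [Ideal.span_singleton_le_iff_mem, Ideal.mem_comap, phi_detRelation hA]
  exact Ideal.mem_span_singleton_self _

lemma IsStableChain.map_quotientPhi_genericMatrix
    {m : ∀ i, Ideal (MvPolynomial (Fin i × ((ι × ι) ⊕ Unit)) K)}
    (hm : (picardVessiot φ σ hcomm A).IsStableChain m) :
    ((genericMatrix K ι 0).map (Ideal.Quotient.mk (unionIdeal _ m))).map hm.quotientPhi =
      A.map (algebraMap K _) * (genericMatrix K ι 0).map (Ideal.Quotient.mk (unionIdeal _ m)) := by
  have h := congrArg (Ideal.Quotient.mk ((picardVessiot φ σ hcomm A).unionIdeal m)).mapMatrix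
    (map_phi_genericMatrix (φ := φ) (hcomm := hcomm) (A := A) id 0)
  rw [map_mul] at h
  exact (Matrix.ext fun _ _ => hm.quotientPhi_mk _).trans h

end

end PicardVessiot

end DifferenceSystem

open DifferenceSystem in
theorem exists_sigma_pv_ring_general {K : Type u} [Field K] {ι : Type v} [Fintype ι]
    [DecidableEq ι] (φ σ : K →+* K) (hcomm : φ.comp σ = σ.comp φ) (A : Matrix ι ι K)
    (hA : IsUnit A.det) :
    ∃ (R : Type (max u v)) (_ : CommRing R) (_ : Algebra K R) (Φ σ' : R →+* R)
      (Y : Matrix ι ι R) (w : ℕ → R),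
      Φ.comp σ' = σ'.comp Φ ∧
      (∀ a : K, Φ (algebraMap K R a) = algebraMap K R (φ a)) ∧
      (∀ a : K, σ' (algebraMap K R a) = algebraMap K R (σ a)) ∧
      IsUnit Y.det ∧
      Y.map ⇑Φ = A.map ⇑(algebraMap K R) * Y ∧
      (∀ i : ℕ, (Y.map ((⇑σ')^[i])).det * w i = 1) ∧
      Algebra.adjoin K
        ({x : R | ∃ (i : ℕ) (p q : ι), (Y.map ((⇑σ')^[i])) p q = x} ∪ Set.range w)
        = ⊤ ∧
      DiffSimple Φ ∧ PseudoDomain Φ ∧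
      (∀ r : R, Φ r = r → ∃ p : Polynomial R, p ≠ 0 ∧
        (∀ m : ℕ, ∃ a : K, φ a = a ∧ algebraMap K R a = p.coeff m) ∧
        Polynomial.eval r p = 0) := by
  obtain ⟨m, hIm, hm⟩ := (picardVessiot φ σ hcomm A).exists_isStableChain
    (span_detRelation_ne_top 0) (span_detRelation_le_comap_phi hA _ 0)
  have hrel := hm.detRelation_mem_unionIdeal (hIm (Ideal.mem_span_singleton_self _))
  have hdet (i : ℕ) := det_map_mk_genericMatrix_mul_eq_one (hrel i)
  have hiter := hm.map_iterate_quotientShift_genericMatrix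
  refine ⟨_, inferInstance, inferInstance, hm.quotientPhi, hm.quotientShift, _, _,
    hm.quotientPhi_comp_quotientShift, hm.quotientPhi_algebraMap, hm.quotientShift_algebraMap,
    .of_mul_eq_one _ (hdet 0), hm.map_quotientPhi_genericMatrix, fun i => hiter i ▸ hdet i, ?_,
    hm.diffSimple_quotientPhi, hm.pseudoDomain_quotientPhi, fun r hr => ?_⟩
  · simp only [hiter]
    exact adjoin_genericMatrix_union_range _
  · obtain ⟨p, hp, hpφ, hpr⟩ := hm.exists_map_eq_self_aeval_eq_zero hr
    have : Nontrivial (MvPolynomial (ℕ × ((ι × ι) ⊕ Unit)) K ⧸ unionIdeal _ m) :=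
      Ideal.Quotient.nontrivial_iff.2 hm.unionIdeal_ne_top
    refine ⟨p.map (algebraMap K _), (hp.map _).ne_zero, fun k => ⟨p.coeff k, ?_, ?_⟩, ?_⟩
    · rw [← Polynomial.coeff_map]
      exact congrArg (Polynomial.coeff · k) hpφ
    · rw [Polynomial.coeff_map]
    · rw [Polynomial.eval_map_algebraMap, hpr]

/-- Existence of `σ`-Picard–Vessiot rings: if `K` is a `φσ`-field with `K^{φ^∞} = K^φ`
and `σ : K^φ → K^φ` surjective, then for every `A ∈ GLₙ(K)` there is a `σ`-PV ring `R`
for `φ(y) = Ay` whose `Φ`-constants are algebraic over `K^φ`. -/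
theorem exists_sigma_pv_ring
    {K : Type u} [Field K] {n : ℕ}
    (φ σ : K →+* K) (hcomm : φ.comp σ = σ.comp φ)
    (hper : ∀ (a : K) (m : ℕ), 1 ≤ m → (⇑φ)^[m] a = a → φ a = a)
    (honto : ∀ a : K, φ a = a → ∃ b : K, φ b = b ∧ σ b = a)
    (A : Matrix (Fin n) (Fin n) K) (hA : IsUnit A.det) :
    ∃ (R : Type u) (_ : CommRing R) (_ : Algebra K R) (Φ σ' : R →+* R)
      (Y : Matrix (Fin n) (Fin n) R) (w : ℕ → R),
      -- `R` is a `K`-`φσ`-algebra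
      Φ.comp σ' = σ'.comp Φ ∧
      (∀ a : K, Φ (algebraMap K R a) = algebraMap K R (φ a)) ∧
      (∀ a : K, σ' (algebraMap K R a) = algebraMap K R (σ a)) ∧
      -- `Y` is a fundamental solution matrix of `φ(y) = Ay`
      IsUnit Y.det ∧
      Y.map ⇑Φ = A.map ⇑(algebraMap K R) * Y ∧
      -- `R` is `σ`-generated by the entries of the `σ'^i(Y)` and the inverses of their
      -- determinants
      (∀ i : ℕ, (Y.map ((⇑σ')^[i])).det * w i = 1) ∧
      Algebra.adjoin K
        ({x : R | ∃ (i : ℕ) (p q : Fin n), (Y.map ((⇑σ')^[i])) p q = x} ∪ Set.range w)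
        = ⊤ ∧
      -- `R` is `Φ`-simple and a `Φ`-pseudo domain
      DiffSimple Φ ∧ PseudoDomain Φ ∧
      -- every `Φ`-constant of `R` is algebraic over `K^φ`
      (∀ r : R, Φ r = r → ∃ p : Polynomial R, p ≠ 0 ∧
        (∀ m : ℕ, ∃ a : K, φ a = a ∧ algebraMap K R a = p.coeff m) ∧
        Polynomial.eval r p = 0) :=
  exists_sigma_pv_ring_general φ σ hcomm A hA
end
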